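/- arXiv:1411.5308 — 8 statements merged into one kernel-verified Lean document; each statement's English description precedes it below -/
import Mathlib

section
/- Let Γ be a finite group, x ≥ 1, y ≥ 0, and (f,c) : x → 1+y a morphism of OI_Γ. Set z = x−1 if f(1) = 1 and z = x otherwise. Then there exist morphisms (f₁,c₁) : x → 1+z and (f₂,c₂) : z → y of OI_Γ with (f,c) = (𝕀⊙(f₂,c₂)) ∘ (f₁,c₁). Moreover: if f(1) ≠ 1 there is no such factorization with z replaced by x−1; in any such factorization (for the given z) the increasing injections f₁ and f₂ are uniquely determined by f (f₁ is the identity of [x] if f(1)=1, and is the map r ↦ 1+r otherwise); for a fixed (f₁,c₁) the morphism (f₂,c₂) is unique; and for any two such factorizations ((f₁,c₁),(f₂,c₂)) and ((f₁,c₁′),(f₂,c₂′)) there exists a morphism (id,d) : z → z of OI_Γ with (f₁,c₁′) = (𝕀⊙(id,d)) ∘ (f₁,c₁) and (f₂,c₂) = (f₂,c₂′) ∘ (id,d). -/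
/-- Morphisms of `OI_Γ` from `[x]` to `[y]`: pairs `(f, c)` with `f : [x] → [y]` a strictly
increasing (hence injective) map and `c : [x] → Γ` an arbitrary map.  We model
`[n] = {1,…,n}` by `Fin n`, so the element `1 ∈ [1+y]` corresponds to `0 : Fin (y+1)`. -/
structure OIGHom (Γ : Type) (x y : ℕ) where
  f : Fin x → Fin y
  mono : StrictMono f
  c : Fin x → Γ

/-- Composition in `OI_Γ`: `(f₂,c₂) ∘ (f₁,c₁) = (f₂∘f₁, r ↦ c₂(f₁ r) · c₁ r)`. -/
def OIGcomp {Γ : Type} [Group Γ] {x y z : ℕ} (β : OIGHom Γ y z) (α : OIGHom Γ x y) :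
    OIGHom Γ x z :=
  ⟨β.f ∘ α.f, β.mono.comp α.mono, fun r => β.c (α.f r) * α.c r⟩

theorem shiftMono {x y : ℕ} {f : Fin x → Fin y} (hf : StrictMono f) :
    StrictMono (Fin.cases 0 (fun r => (f r).succ) : Fin (x + 1) → Fin (y + 1)) := by
  intro a b hab
  induction a using Fin.cases with
  | zero =>
    induction b using Fin.cases with
    | zero => exact absurd hab (lt_irrefl _)
    | succ b => simp only [Fin.cases_zero, Fin.cases_succ]; exact Fin.succ_pos _
  | succ a =>
    induction b using Fin.cases with
    | zero => exact absurd hab (Fin.not_lt.mpr (Fin.zero_le _))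
    | succ b =>
      simp only [Fin.cases_succ]
      exact Fin.succ_lt_succ_iff.mpr (hf (Fin.succ_lt_succ_iff.mp hab))

/-- The shift `𝕀 ⊙ (f,c)` of a morphism of `OI_Γ`: `(f⁺, c⁺)` where `f⁺(1) = 1`,
`f⁺(1+r) = 1+f(r)`, `c⁺(1) = 1` and `c⁺(1+r) = c(r)`. -/
def OIGshift {Γ : Type} [Group Γ] {x y : ℕ} (α : OIGHom Γ x y) : OIGHom Γ (x + 1) (y + 1) :=
  ⟨Fin.cases 0 (fun r => (α.f r).succ), shiftMono α.mono, Fin.cons 1 α.c⟩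

/-!
An increasing map `[x] → [1+y]` hitting `1` sends only the element `1` there, and one that misses
`1` is `r ↦ 1 + k r` with `k` increasing; this gives the factorization, with all coefficients put
in the first factor.  Conversely, the shape of the first injection is forced, since an increasing
self-map of a finite chain is the identity.  It covers `2, …, 1+z`, so `f₂` and the products
`c₂(k) c₁(r)`, where `f₁(r) = 1+k`, are determined by `(f, c)`.  Two factorizations therefore
differ by the elements `d(k) = c₂'(k)⁻¹ c₂(k)`.
-/

attribute [ext] OIGHom

theorem eq_succ_of_strictMono_of_ne_zero {n : ℕ} {f : Fin n → Fin (n + 1)} (hf : StrictMono f)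
    (hne : ∀ r, f r ≠ 0) : f = Fin.succ :=
  Fin.strictMono_cons_zero_succ.mp
    (Fin.strictMono_cons.mpr ⟨fun r => Fin.pos_of_ne_zero (hne r), hf⟩)

theorem ne_zero_of_monotone_of_apply_zero_ne_zero {m n : ℕ} {f : Fin (m + 1) → Fin (n + 1)}
    (hf : Monotone f) (h0 : f 0 ≠ 0) (r : Fin (m + 1)) : f r ≠ 0 :=
  ((Fin.pos_of_ne_zero h0).trans_le (hf (Fin.zero_le r))).ne'

theorem exists_strictMono_succ_comp_eq {ι : Type*} [Preorder ι] {n : ℕ} {f : ι → Fin (n + 1)}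
    (hf : StrictMono f) (hne : ∀ r, f r ≠ 0) : ∃ k : ι → Fin n, StrictMono k ∧ Fin.succ ∘ k = f :=
  ⟨fun r => (f r).pred (hne r), Fin.strictMono_pred_comp hne hf,
    funext fun r => Fin.succ_pred (f r) (hne r)⟩

namespace OIGHom

variable {Γ : Type} [Group Γ] {x y z : ℕ}

section Components

variable (α : OIGHom Γ x y)

@[simp]
theorem shift_f_zero : (OIGshift α).f 0 = 0 := rfl

@[simp]
theorem shift_f_succ (r : Fin x) : (OIGshift α).f r.succ = (α.f r).succ := rfl

@[simp]
theorem shift_c_zero : (OIGshift α).c 0 = 1 := rfl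

@[simp]
theorem shift_c_succ (r : Fin x) : (OIGshift α).c r.succ = α.c r := rfl

@[simp]
theorem comp_f_apply (β : OIGHom Γ y z) (r : Fin x) : (OIGcomp β α).f r = β.f (α.f r) := rfl

@[simp]
theorem comp_c_apply (β : OIGHom Γ y z) (r : Fin x) :
    (OIGcomp β α).c r = β.c (α.f r) * α.c r := rfl

end Components

section Uniqueness

variable {α₁ α₁' : OIGHom Γ x (z + 1)} {α₂ α₂' : OIGHom Γ z y}

theorem f_eq_of_shift_comp_eq (hcover : ∀ k : Fin z, k.succ ∈ Set.range α₁.f)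
    (hf : α₁.f = α₁'.f)
    (h : OIGcomp (OIGshift α₂) α₁ = OIGcomp (OIGshift α₂') α₁') : α₂.f = α₂'.f := by
  funext k
  obtain ⟨r, hr⟩ := hcover k
  have hr' : α₁'.f r = k.succ := hf ▸ hr
  simpa [hr, hr'] using congrArg (fun β => β.f r) h

theorem c_mul_c_eq_of_shift_comp_eq (hf : α₁.f = α₁'.f)
    (h : OIGcomp (OIGshift α₂) α₁ = OIGcomp (OIGshift α₂') α₁') {r : Fin x} {k : Fin z}
    (hr : α₁.f r = k.succ) : α₂.c k * α₁.c r = α₂'.c k * α₁'.c r := by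
  have hr' : α₁'.f r = k.succ := hf ▸ hr
  simpa [hr, hr'] using congrArg (fun β => β.c r) h

theorem c_eq_of_shift_comp_eq_of_f_eq_zero (hf : α₁.f = α₁'.f)
    (h : OIGcomp (OIGshift α₂) α₁ = OIGcomp (OIGshift α₂') α₁') {r : Fin x}
    (hr : α₁.f r = 0) : α₁.c r = α₁'.c r := by
  have hr' : α₁'.f r = 0 := hf ▸ hr
  simpa [hr, hr'] using congrArg (fun β => β.c r) h

theorem eq_of_shift_comp_eq (hcover : ∀ k : Fin z, k.succ ∈ Set.range α₁.f)
    (h : OIGcomp (OIGshift α₂) α₁ = OIGcomp (OIGshift α₂') α₁) : α₂ = α₂' := by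
  refine OIGHom.ext (f_eq_of_shift_comp_eq hcover rfl h) (funext fun k => ?_)
  obtain ⟨r, hr⟩ := hcover k
  exact mul_right_cancel (c_mul_c_eq_of_shift_comp_eq rfl h hr)

theorem exists_twist_of_shift_comp_eq (hcover : ∀ k : Fin z, k.succ ∈ Set.range α₁.f)
    (hf : α₁.f = α₁'.f)
    (h : OIGcomp (OIGshift α₂) α₁ = OIGcomp (OIGshift α₂') α₁') :
    ∃ d : Fin z → Γ,
      α₁' = OIGcomp (OIGshift ⟨id, strictMono_id, d⟩) α₁ ∧
      α₂ = OIGcomp α₂' ⟨id, strictMono_id, d⟩ := by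
  have hf₂ : α₂.f = α₂'.f := f_eq_of_shift_comp_eq hcover hf h
  refine ⟨fun k => (α₂'.c k)⁻¹ * α₂.c k,
    OIGHom.ext (funext fun r => ?_) (funext fun r => ?_),
    OIGHom.ext hf₂ (funext fun k => ?_)⟩
  · obtain hr | ⟨k, hr⟩ := (α₁.f r).eq_zero_or_eq_succ <;> simp [← hf, hr]
  · obtain hr | ⟨k, hr⟩ := (α₁.f r).eq_zero_or_eq_succ
    · simp [hr, c_eq_of_shift_comp_eq_of_f_eq_zero hf h hr]
    · simp [hr, mul_assoc, c_mul_c_eq_of_shift_comp_eq hf h hr]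
  · simp

end Uniqueness

theorem exists_eq_shift_comp {α : OIGHom Γ x (y + 1)} {g : Fin x → Fin (z + 1)}
    (hg : StrictMono g) {k : Fin z → Fin y} (hk : StrictMono k)
    (h : α.f = Fin.cases 0 (fun r => (k r).succ) ∘ g) :
    ∃ (α₁ : OIGHom Γ x (z + 1)) (α₂ : OIGHom Γ z y), α = OIGcomp (OIGshift α₂) α₁ := by
  refine ⟨⟨g, hg, α.c⟩, ⟨k, hk, fun _ => 1⟩, OIGHom.ext h (funext fun r => ?_)⟩
  obtain hr | ⟨s, hr⟩ := (g r).eq_zero_or_eq_succ <;> simp [hr]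

/-- `α : x → 1+y` has a factorization `(𝕀⊙α₂) ∘ α₁` through `1+z`, which is essentially unique:
the injection of `α₁` is always `g`, that of `α₂` is always the same, `α₁` determines `α₂`, and any
two factorizations differ by an automorphism `(id, d)` of `z`. -/
def HasEssUniqueShiftFactorization (α : OIGHom Γ x (y + 1)) (g : Fin x → Fin (z + 1)) : Prop :=
  (∃ (α₁ : OIGHom Γ x (z + 1)) (α₂ : OIGHom Γ z y), α = OIGcomp (OIGshift α₂) α₁) ∧
  (∀ (α₁ : OIGHom Γ x (z + 1)) (α₂ : OIGHom Γ z y),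
    α = OIGcomp (OIGshift α₂) α₁ → α₁.f = g) ∧
  (∀ (α₁ α₁' : OIGHom Γ x (z + 1)) (α₂ α₂' : OIGHom Γ z y),
    α = OIGcomp (OIGshift α₂) α₁ → α = OIGcomp (OIGshift α₂') α₁' → α₂.f = α₂'.f) ∧
  (∀ (α₁ : OIGHom Γ x (z + 1)) (α₂ α₂' : OIGHom Γ z y),
    α = OIGcomp (OIGshift α₂) α₁ → α = OIGcomp (OIGshift α₂') α₁ → α₂ = α₂') ∧
  (∀ (α₁ α₁' : OIGHom Γ x (z + 1)) (α₂ α₂' : OIGHom Γ z y),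
    α = OIGcomp (OIGshift α₂) α₁ → α = OIGcomp (OIGshift α₂') α₁' →
      ∃ d : Fin z → Γ,
        α₁' = OIGcomp (OIGshift ⟨id, strictMono_id, d⟩) α₁ ∧
        α₂ = OIGcomp α₂' ⟨id, strictMono_id, d⟩)

theorem HasEssUniqueShiftFactorization.of_forall_f_eq {α : OIGHom Γ x (y + 1)}
    {g : Fin x → Fin (z + 1)} (hcover : ∀ k : Fin z, k.succ ∈ Set.range g)
    (hex : ∃ (α₁ : OIGHom Γ x (z + 1)) (α₂ : OIGHom Γ z y), α = OIGcomp (OIGshift α₂) α₁)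
    (hf : ∀ (α₁ : OIGHom Γ x (z + 1)) (α₂ : OIGHom Γ z y),
      α = OIGcomp (OIGshift α₂) α₁ → α₁.f = g) :
    α.HasEssUniqueShiftFactorization g := by
  have cover {α₁ : OIGHom Γ x (z + 1)} {α₂ : OIGHom Γ z y} (h : α = OIGcomp (OIGshift α₂) α₁) :
      ∀ k : Fin z, k.succ ∈ Set.range α₁.f := hf α₁ α₂ h ▸ hcover
  have f_eq {α₁ α₁' : OIGHom Γ x (z + 1)} {α₂ α₂' : OIGHom Γ z y}
      (h : α = OIGcomp (OIGshift α₂) α₁) (h' : α = OIGcomp (OIGshift α₂') α₁') :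
      α₁.f = α₁'.f := (hf α₁ α₂ h).trans (hf α₁' α₂' h').symm
  exact ⟨hex, hf,
    fun _ _ _ _ h h' => f_eq_of_shift_comp_eq (cover h) (f_eq h h') (h.symm.trans h'),
    fun _ _ _ h h' => eq_of_shift_comp_eq (cover h) (h.symm.trans h'),
    fun _ _ _ _ h h' => exists_twist_of_shift_comp_eq (cover h) (f_eq h h') (h.symm.trans h')⟩

section Cases

variable {α : OIGHom Γ (x + 1) (y + 1)}

theorem hasEssUniqueShiftFactorization_id (h0 : α.f 0 = 0) :
    α.HasEssUniqueShiftFactorization (z := x) id := by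
  have hne (r : Fin x) : α.f r.succ ≠ 0 := h0 ▸ (α.mono (Fin.succ_pos r)).ne'
  obtain ⟨k, hk, hkf⟩ :=
    exists_strictMono_succ_comp_eq (α.mono.comp Fin.strictMono_succ) hne
  have hα : α.f = Fin.cases 0 (fun r => (k r).succ) := by
    funext r
    cases r using Fin.cases with
    | zero => exact h0
    | succ r => exact (congrFun hkf r).symm
  exact .of_forall_f_eq (fun k => ⟨k.succ, rfl⟩) (exists_eq_shift_comp strictMono_id hk hα)
    fun α₁ _ _ => α₁.mono.eq_id

theorem f_eq_succ_of_eq_shift_comp (h0 : α.f 0 ≠ 0) {α₁ : OIGHom Γ (x + 1) (x + 1 + 1)}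
    {α₂ : OIGHom Γ (x + 1) y} (h : α = OIGcomp (OIGshift α₂) α₁) : α₁.f = Fin.succ := by
  have hα₁ : α₁.f 0 ≠ 0 := fun h₁ => h0 (by simp [h, h₁])
  exact eq_succ_of_strictMono_of_ne_zero α₁.mono
    (ne_zero_of_monotone_of_apply_zero_ne_zero α₁.mono.monotone hα₁)

theorem hasEssUniqueShiftFactorization_succ (h0 : α.f 0 ≠ 0) :
    α.HasEssUniqueShiftFactorization Fin.succ := by
  obtain ⟨k, hk, hkf⟩ := exists_strictMono_succ_comp_eq α.mono
    (ne_zero_of_monotone_of_apply_zero_ne_zero α.mono.monotone h0)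
  exact .of_forall_f_eq (fun k => ⟨k, rfl⟩)
    (exists_eq_shift_comp Fin.strictMono_succ hk hkf.symm)
    fun _ _ => f_eq_succ_of_eq_shift_comp h0

theorem f_zero_eq_zero_of_eq_shift_comp {α₁ : OIGHom Γ (x + 1) (x + 1)} {α₂ : OIGHom Γ x y}
    (h : α = OIGcomp (OIGshift α₂) α₁) : α.f 0 = 0 := by
  simp [h, α₁.mono.eq_id]

end Cases

end OIGHom

theorem stmt3_general {Γ : Type} [Group Γ] {x y : ℕ} (α : OIGHom Γ (x + 1) (y + 1)) :
    (α.f 0 = 0 → α.HasEssUniqueShiftFactorization (z := x) id) ∧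
    (α.f 0 ≠ 0 → α.HasEssUniqueShiftFactorization Fin.succ ∧
      ¬ ∃ (α₁ : OIGHom Γ (x + 1) (x + 1)) (α₂ : OIGHom Γ x y),
        α = OIGcomp (OIGshift α₂) α₁) :=
  ⟨OIGHom.hasEssUniqueShiftFactorization_id, fun h0 =>
    ⟨OIGHom.hasEssUniqueShiftFactorization_succ h0,
      fun ⟨_, _, h⟩ => h0 (OIGHom.f_zero_eq_zero_of_eq_shift_comp h)⟩⟩

/-- Let `Γ` be a finite group, `x ≥ 1` (the paper's `x` is our `x+1`),
`y ≥ 0`, and `(f,c) : x → 1+y` a morphism of `OI_Γ`.  Set `z = x−1` if `f(1) = 1` and `z = x`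
otherwise.  Then a factorization `(f,c) = (𝕀⊙(f₂,c₂)) ∘ (f₁,c₁)` through `z` exists; if
`f(1) ≠ 1` there is no such factorization through `x−1`; in any such factorization the
increasing injections `f₁`, `f₂` are uniquely determined by `f` (`f₁ = id` if `f(1)=1` and
`f₁ = (r ↦ 1+r)` otherwise); for a fixed `(f₁,c₁)` the morphism `(f₂,c₂)` is unique; and any
two such factorizations are related by a morphism `(id,d) : z → z` of `OI_Γ`. -/
theorem stmt3 {Γ : Type} [Group Γ] [Finite Γ] (x y : ℕ) (α : OIGHom Γ (x + 1) (y + 1)) :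
    (α.f 0 = 0 →
      (∃ (α₁ : OIGHom Γ (x + 1) (x + 1)) (α₂ : OIGHom Γ x y),
        α = OIGcomp (OIGshift α₂) α₁) ∧
      (∀ (α₁ : OIGHom Γ (x + 1) (x + 1)) (α₂ : OIGHom Γ x y),
        α = OIGcomp (OIGshift α₂) α₁ → α₁.f = id) ∧
      (∀ (α₁ α₁' : OIGHom Γ (x + 1) (x + 1)) (α₂ α₂' : OIGHom Γ x y),
        α = OIGcomp (OIGshift α₂) α₁ → α = OIGcomp (OIGshift α₂') α₁' →
          α₂.f = α₂'.f) ∧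
      (∀ (α₁ : OIGHom Γ (x + 1) (x + 1)) (α₂ α₂' : OIGHom Γ x y),
        α = OIGcomp (OIGshift α₂) α₁ → α = OIGcomp (OIGshift α₂') α₁ → α₂ = α₂') ∧
      (∀ (α₁ α₁' : OIGHom Γ (x + 1) (x + 1)) (α₂ α₂' : OIGHom Γ x y),
        α = OIGcomp (OIGshift α₂) α₁ → α = OIGcomp (OIGshift α₂') α₁' →
          ∃ d : Fin x → Γ,
            α₁' = OIGcomp (OIGshift ⟨id, strictMono_id, d⟩) α₁ ∧
            α₂ = OIGcomp α₂' ⟨id, strictMono_id, d⟩)) ∧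
    (α.f 0 ≠ 0 →
      (∃ (α₁ : OIGHom Γ (x + 1) (x + 1 + 1)) (α₂ : OIGHom Γ (x + 1) y),
        α = OIGcomp (OIGshift α₂) α₁) ∧
      (¬ ∃ (α₁ : OIGHom Γ (x + 1) (x + 1)) (α₂ : OIGHom Γ x y),
        α = OIGcomp (OIGshift α₂) α₁) ∧
      (∀ (α₁ : OIGHom Γ (x + 1) (x + 1 + 1)) (α₂ : OIGHom Γ (x + 1) y),
        α = OIGcomp (OIGshift α₂) α₁ → α₁.f = Fin.succ) ∧
      (∀ (α₁ α₁' : OIGHom Γ (x + 1) (x + 1 + 1)) (α₂ α₂' : OIGHom Γ (x + 1) y),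
        α = OIGcomp (OIGshift α₂) α₁ → α = OIGcomp (OIGshift α₂') α₁' →
          α₂.f = α₂'.f) ∧
      (∀ (α₁ : OIGHom Γ (x + 1) (x + 1 + 1)) (α₂ α₂' : OIGHom Γ (x + 1) y),
        α = OIGcomp (OIGshift α₂) α₁ → α = OIGcomp (OIGshift α₂') α₁ → α₂ = α₂') ∧
      (∀ (α₁ α₁' : OIGHom Γ (x + 1) (x + 1 + 1)) (α₂ α₂' : OIGHom Γ (x + 1) y),
        α = OIGcomp (OIGshift α₂) α₁ → α = OIGcomp (OIGshift α₂') α₁' →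
          ∃ d : Fin (x + 1) → Γ,
            α₁' = OIGcomp (OIGshift ⟨id, strictMono_id, d⟩) α₁ ∧
            α₂ = OIGcomp α₂' ⟨id, strictMono_id, d⟩)) :=
  ⟨(stmt3_general α).1, fun h0 =>
    let ⟨⟨hex, huniq⟩, hnex⟩ := (stmt3_general α).2 h0; ⟨hex, hnex, huniq⟩⟩
end

section
/- Let Γ be a finite group and x ≥ 1. Then there exists a family of bijections Θ_y : OI_Γ(x,y) ⊔ (Γ × OI_Γ(x−1,y)) → OI_Γ(x,1+y), one for each integer y ≥ 0, such that for every morphism (g,e) : y → y′ of OI_Γ one has Θ_{y′}((g,e)∘α) = (𝕀⊙(g,e)) ∘ Θ_y(α) for every α ∈ OI_Γ(x,y), and Θ_{y′}(γ, (g,e)∘β) = (𝕀⊙(g,e)) ∘ Θ_y(γ, β) for every γ ∈ Γ and β ∈ OI_Γ(x−1,y). -/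
namespace OIGHom

variable {Γ : Type} {x y z : ℕ}

/-- The morphism `[x] → [1+y]` avoiding `1` that is obtained from `α : [x] → [y]` by moving all
values up by one. -/
def succ (α : OIGHom Γ x y) : OIGHom Γ x (y + 1) :=
  ⟨fun r => (α.f r).succ, Fin.strictMono_succ.comp α.mono, α.c⟩

/-- The inverse of `OIGHom.succ` on morphisms `[x] → [1+y]` that avoid `1`. -/
def pred (α : OIGHom Γ x (y + 1)) (h : ∀ r, α.f r ≠ 0) : OIGHom Γ x y :=
  ⟨fun r => (α.f r).pred (h r), fun _ _ hrs => Fin.pred_lt_pred_iff.mpr (α.mono hrs), α.c⟩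

/-- The morphism `[1+x] → [1+y]` that sends `1` to `1` with label `γ` and acts as `β` on the
remaining elements. The shift `𝕀 ⊙ β` is the case `γ = 1`. -/
def cons (γ : Γ) (β : OIGHom Γ x y) : OIGHom Γ (x + 1) (y + 1) :=
  ⟨Fin.cases 0 fun r => (β.f r).succ, shiftMono β.mono, Fin.cons γ β.c⟩

theorem f_succ_ne_zero (α : OIGHom Γ (x + 1) (y + 1)) (r : Fin x) : α.f r.succ ≠ 0 :=
  Fin.ne_zero_of_lt (α.mono r.succ_pos)

/-- The restriction of a morphism `[1+x] → [1+y]` to the elements other than `1`, which never take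
the value `1`; the values are moved down by one to undo `OIGHom.cons`. -/
def tail (α : OIGHom Γ (x + 1) (y + 1)) : OIGHom Γ x y :=
  pred ⟨fun r => α.f r.succ, α.mono.comp Fin.strictMono_succ, Fin.tail α.c⟩ α.f_succ_ne_zero

theorem f_ne_zero_of_f_zero_ne_zero {α : OIGHom Γ (x + 1) (y + 1)} (h : α.f 0 ≠ 0)
    (r : Fin (x + 1)) : α.f r ≠ 0 :=
  Fin.ne_zero_of_lt ((Fin.pos_of_ne_zero h).trans_le (α.mono.monotone r.zero_le))

theorem pred_succ (α : OIGHom Γ x y) : α.succ.pred (fun _ => Fin.succ_ne_zero _) = α := rfl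

theorem succ_pred (α : OIGHom Γ x (y + 1)) (h : ∀ r, α.f r ≠ 0) : (α.pred h).succ = α :=
  OIGHom.ext (funext fun r => Fin.succ_pred (α.f r) (h r)) rfl

theorem tail_cons (γ : Γ) (β : OIGHom Γ x y) : (cons γ β).tail = β := rfl

theorem cons_tail {α : OIGHom Γ (x + 1) (y + 1)} (h : α.f 0 = 0) : cons (α.c 0) α.tail = α :=
  OIGHom.ext
    (funext <| Fin.cases h.symm fun r => Fin.succ_pred (α.f r.succ) (α.f_succ_ne_zero r))
    (Fin.cons_self_tail α.c)

/-- The bijection `Θ_y`: a morphism `[1+x] → [1+y]` comes from `OIGHom.succ` or from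
`OIGHom.cons` according to whether it avoids `1` or not. -/
def sumEquiv (Γ : Type) (x y : ℕ) :
    (OIGHom Γ (x + 1) y ⊕ (Γ × OIGHom Γ x y)) ≃ OIGHom Γ (x + 1) (y + 1) where
  toFun := Sum.elim succ fun p => cons p.1 p.2
  invFun α :=
    if h : α.f 0 = 0 then Sum.inr (α.c 0, α.tail)
    else Sum.inl (α.pred (f_ne_zero_of_f_zero_ne_zero h))
  left_inv
    | Sum.inl α =>
      (dif_neg (Fin.succ_ne_zero (α.f 0))).trans (congrArg Sum.inl α.pred_succ)
    | Sum.inr (γ, β) =>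
      (dif_pos rfl).trans (congrArg (fun β' => Sum.inr (γ, β')) (tail_cons γ β))
  right_inv α := by
    by_cases h : α.f 0 = 0
    · simp only [h, dite_true, Sum.elim_inr, cons_tail]
    · simp only [h, dite_false, Sum.elim_inl, succ_pred]

section Comp

variable [Group Γ]

theorem comp_cons_succ (γ : Γ) (g : OIGHom Γ y z) (α : OIGHom Γ x y) :
    OIGcomp (cons γ g) α.succ = (OIGcomp g α).succ := rfl

theorem comp_cons_cons (γ δ : Γ) (g : OIGHom Γ y z) (β : OIGHom Γ x y) :
    OIGcomp (cons γ g) (cons δ β) = cons (γ * δ) (OIGcomp g β) :=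
  OIGHom.ext (funext <| Fin.cases rfl fun _ => rfl) (funext <| Fin.cases rfl fun _ => rfl)

theorem shift_eq_cons_one (g : OIGHom Γ x y) : OIGshift g = cons 1 g := rfl

theorem sumEquiv_inl_comp (g : OIGHom Γ y z) (α : OIGHom Γ (x + 1) y) :
    sumEquiv Γ x z (Sum.inl (OIGcomp g α)) =
      OIGcomp (OIGshift g) (sumEquiv Γ x y (Sum.inl α)) :=
  (comp_cons_succ 1 g α).symm

theorem sumEquiv_inr_comp (g : OIGHom Γ y z) (γ : Γ) (β : OIGHom Γ x y) :
    sumEquiv Γ x z (Sum.inr (γ, OIGcomp g β)) =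
      OIGcomp (OIGshift g) (sumEquiv Γ x y (Sum.inr (γ, β))) := by
  change cons γ (OIGcomp g β) = OIGcomp (OIGshift g) (cons γ β)
  rw [shift_eq_cons_one, comp_cons_cons, one_mul]

end Comp

end OIGHom

theorem stmt4_general (Γ : Type) [Group Γ] (x : ℕ) :
    ∃ Θ : ∀ y : ℕ, (OIGHom Γ (x + 1) y ⊕ (Γ × OIGHom Γ x y)) ≃ OIGHom Γ (x + 1) (y + 1),
      ∀ (y y' : ℕ) (g : OIGHom Γ y y'),
        (∀ α : OIGHom Γ (x + 1) y,
          Θ y' (Sum.inl (OIGcomp g α)) = OIGcomp (OIGshift g) (Θ y (Sum.inl α))) ∧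
        (∀ (γ : Γ) (β : OIGHom Γ x y),
          Θ y' (Sum.inr (γ, OIGcomp g β)) = OIGcomp (OIGshift g) (Θ y (Sum.inr (γ, β)))) :=
  ⟨OIGHom.sumEquiv Γ x, fun _ _ g =>
    ⟨OIGHom.sumEquiv_inl_comp g, OIGHom.sumEquiv_inr_comp g⟩⟩

/-- Let `Γ` be a finite group and `x ≥ 1` (the paper's `x` is our `x+1`).
There is a family of bijections `Θ_y : OI_Γ(x,y) ⊔ (Γ × OI_Γ(x−1,y)) → OI_Γ(x,1+y)`, `y ∈ ℕ`,
natural with respect to postcomposition: for every `(g,e) : y → y′` of `OI_Γ`,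
`Θ_{y′}((g,e)∘α) = (𝕀⊙(g,e)) ∘ Θ_y(α)` and `Θ_{y′}(γ, (g,e)∘β) = (𝕀⊙(g,e)) ∘ Θ_y(γ, β)`. -/
theorem stmt4 (Γ : Type) [Group Γ] [Finite Γ] (x : ℕ) :
    ∃ Θ : ∀ y : ℕ, (OIGHom Γ (x + 1) y ⊕ (Γ × OIGHom Γ x y)) ≃ OIGHom Γ (x + 1) (y + 1),
      ∀ (y y' : ℕ) (g : OIGHom Γ y y'),
        (∀ α : OIGHom Γ (x + 1) y,
          Θ y' (Sum.inl (OIGcomp g α)) = OIGcomp (OIGshift g) (Θ y (Sum.inl α))) ∧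
        (∀ (γ : Γ) (β : OIGHom Γ x y),
          Θ y' (Sum.inr (γ, OIGcomp g β)) = OIGcomp (OIGshift g) (Θ y (Sum.inr (γ, β)))) :=
  stmt4_general Γ x
end

section
/- Let d ≥ 1 and x ≥ 1. Then there exists a family of bijections Θ_y : ([d] × OI_d(x,y)) ⊔ OI_d(x−1,y) → OI_d(x,1+y), one for each integer y ≥ 0, such that for every morphism (g,ε) : y → y′ of OI_d one has Θ_{y′}(i, (g,ε)∘α) = (𝕀⊙(g,ε)) ∘ Θ_y(i, α) for every i ∈ [d], α ∈ OI_d(x,y), and Θ_{y′}((g,ε)∘β) = (𝕀⊙(g,ε)) ∘ Θ_y(β) for every β ∈ OI_d(x−1,y). -/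
/-- Morphisms of `OI_d` from `[x]` to `[y]`: pairs `(f, δ)` with `f : [x] → [y]` strictly
increasing (hence injective) and `δ : [y]∖f([x]) → [d]` an arbitrary map.  We model
`[n] = {1,…,n}` by `Fin n`, so the element `1 ∈ [1+y]` corresponds to `0 : Fin (y+1)`. -/
structure OIdHom (d x y : ℕ) where
  f : Fin x → Fin y
  mono : StrictMono f
  δ : ∀ m : Fin y, m ∉ Set.range f → Fin d

/-- Composition in `OI_d`: `(f₂,δ₂) ∘ (f₁,δ₁) = (f₂∘f₁, δ₃)` where `δ₃(m) = δ₁(r)` if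
`m = f₂(r)` with `r ∉ im f₁`, and `δ₃(m) = δ₂(m)` if `m ∉ im f₂`. -/
noncomputable def OIdcomp {d x y z : ℕ} (β : OIdHom d y z) (α : OIdHom d x y) :
    OIdHom d x z where
  f := β.f ∘ α.f
  mono := β.mono.comp α.mono
  δ := fun m hm =>
    if h : ∃ r, β.f r = m then
      α.δ h.choose (fun hr => by
        obtain ⟨s, hs⟩ := hr
        exact hm ⟨s, by rw [Function.comp_apply, hs, h.choose_spec]⟩)
    else
      β.δ m (fun hr => h hr)

/-- The shift `𝕀 ⊙ (f,δ)` of a morphism of `OI_d`: `(f⁺, δ⁺)` where `f⁺(1) = 1`,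
`f⁺(1+r) = 1+f(r)` and `δ⁺(1+s) = δ(s)`. -/
noncomputable def OIdshift {d x y : ℕ} (α : OIdHom d x y) : OIdHom d (x + 1) (y + 1) where
  f := Fin.cases 0 (fun r => (α.f r).succ)
  mono := shiftMono α.mono
  δ := fun m hm =>
    have h0 : m ≠ 0 := by
      rintro rfl
      exact hm ⟨0, by simp⟩
    α.δ (m.pred h0) (by
      rintro ⟨s, hs⟩
      exact hm ⟨s.succ, by simp [hs, Fin.succ_pred]⟩)

/-!
A morphism `(f, δ) : x → y` of `OI_d` is the same as a word of length `y` in the alphabet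
`[d] ⊔ {∗}` containing the letter `∗` exactly `x` times: `∗` marks the image of `f` and the other
letters are the values of `δ`. Composing with `(g, ε)` on the left inserts the letters of `ε` into
the word, and the shift of a morphism puts `∗` in front of its word. So `Θ` is the inverse of
splitting off the first letter of a word with `x` stars: a letter of `[d]` leaves `x` stars
behind, the letter `∗` leaves `x - 1`. It is natural because `𝕀 ⊙ (g, ε)` inserts letters only
after the first one.
-/

theorem extend_finCases_cons_cons {A : Type*} {n m : ℕ} {f : Fin n → Fin m}
    (hf : Function.Injective f) (a b : A) (u : Fin n → A) (v : Fin m → A) :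
    Function.extend (Fin.cases 0 fun r => (f r).succ : Fin (n + 1) → Fin (m + 1))
      (Fin.cons a u : Fin (n + 1) → A) (Fin.cons b v : Fin (m + 1) → A) =
      (Fin.cons a (Function.extend f u v) : Fin (m + 1) → A) := by
  set f' : Fin (n + 1) → Fin (m + 1) := Fin.cases 0 fun r => (f r).succ
  have hf' : Function.Injective f' :=
    Fin.cons_injective_iff.2 ⟨by simp [Fin.succ_ne_zero], (Fin.succ_injective m).comp hf⟩
  funext k
  induction k using Fin.cases with
  | zero => exact hf'.extend_apply _ _ 0
  | succ k =>
    by_cases hk : ∃ r, f r = k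
    · obtain ⟨r, rfl⟩ := hk
      exact (hf'.extend_apply _ _ r.succ).trans (hf.extend_apply u v r).symm
    · have hk' : ¬∃ r, f' r = k.succ := by
        rintro ⟨r, hr⟩
        induction r using Fin.cases with
        | zero => exact Fin.succ_ne_zero k hr.symm
        | succ r => exact hk ⟨r, Fin.succ_injective m hr⟩
      rw [Function.extend_apply' _ _ _ hk', Fin.cons_succ, Fin.cons_succ,
        Function.extend_apply' _ _ _ hk]

namespace OIdHom

variable {d x y z : ℕ}

open Classical in
/-- The word of a morphism `(f, δ) : x → y` of `OI_d`, of length `y`: its `m`-th letter is `δ m`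
for `m` outside the image of `f`, and the extra letter `none` for `m` in the image. -/
noncomputable def word (α : OIdHom d x y) (m : Fin y) : Option (Fin d) :=
  if hm : m ∈ Set.range α.f then none else some (α.δ m hm)

theorem word_f (α : OIdHom d x y) (r : Fin x) : α.word (α.f r) = none :=
  dif_pos ⟨r, rfl⟩

theorem word_of_notMem_range (α : OIdHom d x y) {m : Fin y} (hm : m ∉ Set.range α.f) :
    α.word m = some (α.δ m hm) :=
  dif_neg hm

theorem word_eq_none_iff {α : OIdHom d x y} {m : Fin y} :
    α.word m = none ↔ m ∈ Set.range α.f := by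
  simp [word]

theorem word_injective : Function.Injective (word : OIdHom d x y → Fin y → Option (Fin d)) := by
  intro α β h
  have hrange : Set.range α.f = Set.range β.f := by
    ext m
    rw [← word_eq_none_iff, ← word_eq_none_iff, h]
  obtain ⟨f, hf, δ⟩ := α
  obtain ⟨g, hg, ε⟩ := β
  obtain rfl : f = g := (hf.range_inj hg).1 hrange
  congr 1
  funext m hm
  have hletter := congrFun h m
  rw [word_of_notMem_range _ hm, word_of_notMem_range _ hm] at hletter
  exact Option.some_injective _ hletter

theorem card_word_eq_none (α : OIdHom d x y) :
    (Finset.univ.filter fun m => α.word m = none).card = x := by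
  have himage : (Finset.univ.filter fun m => α.word m = none) = Finset.univ.image α.f := by
    ext m
    simp [word_eq_none_iff]
  rw [himage, Finset.card_image_of_injective _ α.mono.injective, Finset.card_fin]

theorem exists_word_eq_of_card {w : Fin y → Option (Fin d)}
    (hw : (Finset.univ.filter fun m => w m = none).card = x) :
    ∃ α : OIdHom d x y, α.word = w := by
  let e := Finset.orderEmbOfFin _ hw
  have he : ∀ m, m ∈ Set.range e ↔ w m = none := fun m => by
    simp [e, Finset.range_orderEmbOfFin]
  let α : OIdHom d x y :=
    { f := e
      mono := e.strictMono
      δ := fun m hm => (w m).get (Option.isSome_iff_ne_none.2 (mt (he m).2 hm)) }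
  refine ⟨α, funext fun m => ?_⟩
  by_cases hm : m ∈ Set.range α.f
  · rw [word_eq_none_iff.2 hm, (he m).1 hm]
  · rw [word_of_notMem_range α hm, Option.some_get]

theorem word_OIdcomp (β : OIdHom d y z) (α : OIdHom d x y) :
    (OIdcomp β α).word = Function.extend β.f α.word β.word := by
  funext m
  by_cases hβ : ∃ r, β.f r = m
  · obtain ⟨r, rfl⟩ := hβ
    rw [β.mono.injective.extend_apply]
    by_cases hα : r ∈ Set.range α.f
    · obtain ⟨s, rfl⟩ := hα
      exact (word_f (OIdcomp β α) s).trans (word_f α s).symm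
    · have hβα : β.f r ∉ Set.range (OIdcomp β α).f := fun ⟨s, hs⟩ =>
        hα ⟨s, β.mono.injective hs⟩
      have hr : ∃ s, β.f s = β.f r := ⟨r, rfl⟩
      have hchoose : hr.choose = r := β.mono.injective hr.choose_spec
      rw [word_of_notMem_range _ hβα, word_of_notMem_range _ hα]
      simp only [OIdcomp, dif_pos hr, hchoose]
  · have hβα : m ∉ Set.range (OIdcomp β α).f := fun ⟨s, hs⟩ => hβ ⟨α.f s, hs⟩
    rw [Function.extend_apply' _ _ _ hβ, word_of_notMem_range _ hβα, word_of_notMem_range _ hβ]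
    simp only [OIdcomp, dif_neg hβ]

/-- The morphism `x → 1 + y` obtained from `α : x → y` by adding a new first point outside the
image, of colour `i`; on words this puts the letter `i` in front. -/
def cons (i : Fin d) (α : OIdHom d x y) : OIdHom d x (y + 1) where
  f r := (α.f r).succ
  mono := Fin.strictMono_succ.comp α.mono
  δ := Fin.cases (fun _ => i) fun m hm => α.δ m fun ⟨r, hr⟩ => hm ⟨r, congrArg Fin.succ hr⟩

theorem word_cons (i : Fin d) (α : OIdHom d x y) :
    (cons i α).word = (Fin.cons (some i) α.word : Fin (y + 1) → Option (Fin d)) := by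
  funext m
  induction m using Fin.cases with
  | zero => exact word_of_notMem_range _ fun ⟨r, hr⟩ => Fin.succ_ne_zero (α.f r) hr
  | succ m =>
    have hm : m.succ ∈ Set.range (cons i α).f ↔ m ∈ Set.range α.f :=
      ⟨fun ⟨r, hr⟩ => ⟨r, Fin.succ_injective y hr⟩, fun ⟨r, hr⟩ => ⟨r, congrArg Fin.succ hr⟩⟩
    exact dite_congr (propext hm) (fun _ => rfl) fun _ => rfl

theorem word_OIdshift (α : OIdHom d x y) :
    (OIdshift α).word = (Fin.cons none α.word : Fin (y + 1) → Option (Fin d)) := by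
  funext m
  induction m using Fin.cases with
  | zero => exact word_f (OIdshift α) 0
  | succ m =>
    have hm : m.succ ∈ Set.range (OIdshift α).f ↔ m ∈ Set.range α.f := by
      simp [OIdshift, Fin.exists_fin_succ, (Fin.succ_ne_zero m).symm]
    exact dite_congr (propext hm) (fun _ => rfl) fun _ => rfl

theorem word_OIdcomp_OIdshift {α : OIdHom d x (y + 1)} {a : Option (Fin d)}
    {w : Fin y → Option (Fin d)} (g : OIdHom d y z)
    (hα : α.word = (Fin.cons a w : Fin (y + 1) → Option (Fin d))) :
    (OIdcomp (OIdshift g) α).word =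
      (Fin.cons a (Function.extend g.f w g.word) : Fin (z + 1) → Option (Fin d)) := by
  rw [word_OIdcomp, word_OIdshift, hα]
  exact extend_finCases_cons_cons g.mono.injective _ _ _ _

theorem cons_OIdcomp (i : Fin d) (g : OIdHom d y z) (α : OIdHom d x y) :
    cons i (OIdcomp g α) = OIdcomp (OIdshift g) (cons i α) :=
  word_injective <| by rw [word_cons, word_OIdcomp, word_OIdcomp_OIdshift g (word_cons i α)]

theorem OIdshift_OIdcomp (g : OIdHom d y z) (α : OIdHom d x y) :
    OIdshift (OIdcomp g α) = OIdcomp (OIdshift g) (OIdshift α) :=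
  word_injective <| by rw [word_OIdshift, word_OIdcomp, word_OIdcomp_OIdshift g (word_OIdshift α)]

theorem cons_injective :
    Function.Injective fun p : Fin d × OIdHom d x y => cons p.1 p.2 := by
  rintro ⟨i, α⟩ ⟨j, β⟩ h
  have hword := congrArg word h
  simp only [word_cons, Fin.cons_inj, Option.some_inj] at hword
  exact Prod.ext hword.1 (word_injective hword.2)

theorem OIdshift_injective :
    Function.Injective (OIdshift : OIdHom d x y → OIdHom d (x + 1) (y + 1)) := by
  intro α β h
  have hword := congrArg word h
  simp only [word_OIdshift, Fin.cons_inj] at hword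
  exact word_injective hword.2

theorem cons_ne_OIdshift (i : Fin d) (α : OIdHom d (x + 1) y) (β : OIdHom d x y) :
    cons i α ≠ OIdshift β := by
  intro h
  have hword := congrArg word h
  simp [word_cons, word_OIdshift, Fin.cons_inj] at hword

theorem exists_eq_cons_or_eq_OIdshift (γ : OIdHom d (x + 1) (y + 1)) :
    (∃ i α, γ = cons i α) ∨ ∃ β, γ = OIdshift β := by
  have hword : γ.word = Fin.cons (γ.word 0) (Fin.tail γ.word) := (Fin.cons_self_tail _).symm
  have hcard := γ.card_word_eq_none
  rw [Fin.card_filter_univ_succ] at hcard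
  cases h0 : γ.word 0 with
  | some i =>
    rw [if_neg (by simp [h0])] at hcard
    obtain ⟨α, hα⟩ := exists_word_eq_of_card (w := Fin.tail γ.word) hcard
    exact .inl ⟨i, α, word_injective (by rw [word_cons, hα, hword, h0, Fin.tail_cons])⟩
  | none =>
    rw [if_pos h0] at hcard
    obtain ⟨β, hβ⟩ := exists_word_eq_of_card (w := Fin.tail γ.word) (Nat.succ_injective hcard)
    exact .inr ⟨β, word_injective (by rw [word_OIdshift, hβ, hword, h0, Fin.tail_cons])⟩

theorem bijective_sumElim_cons_OIdshift (d x y : ℕ) :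
    Function.Bijective (Sum.elim (fun p => cons p.1 p.2) OIdshift :
      (Fin d × OIdHom d (x + 1) y) ⊕ OIdHom d x y → OIdHom d (x + 1) (y + 1)) := by
  refine ⟨cons_injective.sumElim OIdshift_injective fun p β => cons_ne_OIdshift p.1 p.2 β,
    fun γ => ?_⟩
  obtain ⟨i, α, rfl⟩ | ⟨β, rfl⟩ := exists_eq_cons_or_eq_OIdshift γ
  · exact ⟨.inl (i, α), rfl⟩
  · exact ⟨.inr β, rfl⟩

end OIdHom

/-- Let `d ≥ 1` and `x ≥ 1` (the paper's `x` is our `x+1`, so the paper's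
`x−1` is our `x`).  There is a family of bijections
`Θ_y : ([d] × OI_d(x,y)) ⊔ OI_d(x−1,y) → OI_d(x,1+y)`, `y ∈ ℕ`, natural with respect to
postcomposition: for every `(g,ε) : y → y′` of `OI_d`,
`Θ_{y′}(i, (g,ε)∘α) = (𝕀⊙(g,ε)) ∘ Θ_y(i, α)` and `Θ_{y′}((g,ε)∘β) = (𝕀⊙(g,ε)) ∘ Θ_y(β)`. -/
theorem stmt7 (d x : ℕ) (hd : 1 ≤ d) :
    ∃ Θ : ∀ y : ℕ, ((Fin d × OIdHom d (x + 1) y) ⊕ OIdHom d x y) ≃ OIdHom d (x + 1) (y + 1),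
      ∀ (y y' : ℕ) (g : OIdHom d y y'),
        (∀ (i : Fin d) (α : OIdHom d (x + 1) y),
          Θ y' (Sum.inl (i, OIdcomp g α)) = OIdcomp (OIdshift g) (Θ y (Sum.inl (i, α)))) ∧
        (∀ β : OIdHom d x y,
          Θ y' (Sum.inr (OIdcomp g β)) = OIdcomp (OIdshift g) (Θ y (Sum.inr β))) := by
  exact ⟨fun y => Equiv.ofBijective _ (OIdHom.bijective_sumElim_cons_OIdshift d x y),
    fun _ _ g => ⟨fun i α => OIdHom.cons_OIdcomp i g α, fun β => OIdHom.OIdshift_OIdcomp g β⟩⟩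
end

section
/- Let Γ be a finite group, x ≥ 2, y ≥ 1, and let (f,c) be a morphism of FS_Γ from 1+y to x (so f : [1+y] → [x] is surjective and c : [1+y] → Γ). Let m = f(1). (i) If f⁻¹(m) = {1}, then there exist a morphism (f₁,c₁) : x → x of FS_Γ (so f₁ is a bijection of [x]) and a morphism (f₂,c₂) : y → x−1 of FS_Γ such that (f,c) = (f₁,c₁) ∘ (𝕀⊙(f₂,c₂)). (ii) If f⁻¹(m) ≠ {1}, then no factorization as in (i) exists, but there exist a morphism (f₁,c₁) : 1+x → x of FS_Γ and a morphism (f₂,c₂) : y → x of FS_Γ such that (f,c) = (f₁,c₁) ∘ (𝕀⊙(f₂,c₂)). -/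
/-- Morphisms of `FS_Γ` from `[y]` to `[x]`: pairs `(f, c)` with `f : [y] → [x]` a surjection
and `c : [y] → Γ` an arbitrary map.  We model `[n] = {1,…,n}` by `Fin n`, so the element
`1 ∈ [1+y]` corresponds to `0 : Fin (y+1)`. -/
structure FSGHom (Γ : Type) (y x : ℕ) where
  f : Fin y → Fin x
  surj : Function.Surjective f
  c : Fin y → Γ

/-- Composition in `FS_Γ`: the composite of `(f₂,c₂) : z → y` followed by `(f₁,c₁) : y → x`
is `(f₁∘f₂, r ↦ c₁(f₂ r) · c₂ r)`. -/
def FSGcomp {Γ : Type} [Group Γ] {z y x : ℕ} (α₁ : FSGHom Γ y x) (α₂ : FSGHom Γ z y) :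
    FSGHom Γ z x :=
  ⟨α₁.f ∘ α₂.f, α₁.surj.comp α₂.surj, fun r => α₁.c (α₂.f r) * α₂.c r⟩

theorem shiftSurj {y x : ℕ} {f : Fin y → Fin x} (hf : Function.Surjective f) :
    Function.Surjective (Fin.cases 0 (fun r => (f r).succ) : Fin (y + 1) → Fin (x + 1)) := by
  intro m
  induction m using Fin.cases with
  | zero => exact ⟨0, by simp⟩
  | succ t =>
    obtain ⟨r, hr⟩ := hf t
    exact ⟨r.succ, by simp [hr]⟩

/-- The shift `𝕀 ⊙ (f,c)` of a morphism of `FS_Γ`: `(f⁺, c⁺)` where `f⁺(1) = 1`,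
`f⁺(1+r) = 1+f(r)`, `c⁺(1) = 1` and `c⁺(1+r) = c(r)`. -/
def FSGshift {Γ : Type} [Group Γ] {y x : ℕ} (α : FSGHom Γ y x) : FSGHom Γ (y + 1) (x + 1) :=
  ⟨Fin.cases 0 (fun r => (α.f r).succ), shiftSurj α.surj, Fin.cons 1 α.c⟩

/-!
In a factorization `(f, c) = (f₁, c₁) ∘ (𝕀 ⊙ (f₂, c₂))` the values of `f₁` and `c₁` at `1` are
forced to be `f 1` and `c 1`, and what remains is to write the restriction of `f` to `{2, …, 1 + y}`
as the surjection `f₂` followed by some map; `c` causes no obstruction, since `c₁` may be taken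
trivial away from `1`. If `f⁻¹(m) = {1}`, the image of this restriction is `[x] ∖ {m}`, in bijection
with `[x - 1]`; otherwise it is all of `[x]`. Conversely, the first component of a morphism `x → x`
is injective, so composing with it preserves the fibre `{1}` that `𝕀 ⊙ (f₂, c₂)` has over `1`.
-/

open Function Set

section Tail

variable {n : ℕ} {β : Type*} {f : Fin (n + 1) → β}

variable (f) in
theorem insert_apply_zero_range_tail :
    insert (f 0) (range (Fin.tail f)) = range f := by
  rw [← Fin.range_cons, Fin.cons_self_tail]

theorem preimage_apply_zero_eq_singleton_iff :
    f ⁻¹' {f 0} = {0} ↔ f 0 ∉ range (Fin.tail f) := by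
  simp [Set.ext_iff, Fin.forall_fin_succ, Fin.tail]

theorem surjective_tail_of_mem_range (hf : Surjective f)
    (h : f 0 ∈ range (Fin.tail f)) : Surjective (Fin.tail f) := by
  rw [← range_eq_univ, ← insert_eq_of_mem h, insert_apply_zero_range_tail, hf.range_eq]

theorem range_tail_eq_compl_of_notMem (hf : Surjective f)
    (h : f 0 ∉ range (Fin.tail f)) : range (Fin.tail f) = {f 0}ᶜ := by
  rw [← insert_sdiff_self_of_notMem h, insert_apply_zero_range_tail, hf.range_eq,
    compl_eq_univ_sdiff]

end Tail

theorem exists_surjective_comp_of_range_eq {α β γ : Type*} {f : α → γ} {e : β → γ}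
    (he : Injective e) (h : range f = range e) : ∃ g : α → β, Surjective g ∧ f = e ∘ g := by
  obtain ⟨g, rfl⟩ := range_subset_range_iff_exists_comp.mp h.subset
  refine ⟨g, range_eq_univ.mp (he.image_injective ?_), rfl⟩
  rw [← range_comp, h, image_univ]

attribute [ext] FSGHom

namespace FSGHom

variable {Γ : Type} [Group Γ] {x y : ℕ}

theorem preimage_shift_zero (α : FSGHom Γ y x) : (FSGshift α).f ⁻¹' {0} = {0} := by
  simp [FSGshift, Set.ext_iff, Fin.forall_fin_succ]

theorem preimage_comp_shift_zero {z : ℕ} {α₁ : FSGHom Γ (x + 1) z} (hα₁ : Injective α₁.f)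
    (α₂ : FSGHom Γ y x) :
    (FSGcomp α₁ (FSGshift α₂)).f ⁻¹' {(FSGcomp α₁ (FSGshift α₂)).f 0} = {0} :=
  calc (α₁.f ∘ (FSGshift α₂).f) ⁻¹' {α₁.f 0}
    _ = (FSGshift α₂).f ⁻¹' {0} := by
      rw [preimage_comp, ← image_singleton, hα₁.preimage_image]
    _ = {0} := preimage_shift_zero α₂

theorem exists_eq_comp_shift_of_tail_eq_comp {n : ℕ} (α : FSGHom Γ (y + 1) x)
    {g : Fin y → Fin n} {e : Fin n → Fin x} (hg : Surjective g) (h : Fin.tail α.f = e ∘ g) :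
    ∃ (α₁ : FSGHom Γ (n + 1) x) (α₂ : FSGHom Γ y n), α = FSGcomp α₁ (FSGshift α₂) := by
  let α₂ : FSGHom Γ y n := ⟨g, hg, Fin.tail α.c⟩
  have hf : α.f = Fin.cons (α.f 0) e ∘ (FSGshift α₂).f :=
    funext <| Fin.cases rfl (congrFun h)
  have hsurj : Surjective (Fin.cons (α.f 0) e : Fin (n + 1) → Fin x) :=
    .of_comp (hf ▸ α.surj)
  refine ⟨⟨Fin.cons (α.f 0) e, hsurj, Fin.cons (α.c 0) 1⟩, α₂, FSGHom.ext hf ?_⟩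
  exact funext <| Fin.cases (mul_one _).symm fun _ => (one_mul _).symm

end FSGHom

theorem stmt8_general {Γ : Type} [Group Γ] {x y : ℕ} (α : FSGHom Γ (y + 1) (x + 1)) :
    (α.f ⁻¹' {α.f 0} = {0} ↔
      ∃ (α₁ : FSGHom Γ (x + 1) (x + 1)) (α₂ : FSGHom Γ y x), α = FSGcomp α₁ (FSGshift α₂)) ∧
    (α.f ⁻¹' {α.f 0} ≠ {0} →
      ∃ (α₁ : FSGHom Γ (x + 1 + 1) (x + 1)) (α₂ : FSGHom Γ y (x + 1)),
        α = FSGcomp α₁ (FSGshift α₂)) := by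
  refine ⟨⟨fun h => ?_, ?_⟩, fun h => ?_⟩
  · have hrange : range (Fin.tail α.f) = range (α.f 0).succAbove := by
      rw [range_tail_eq_compl_of_notMem α.surj (preimage_apply_zero_eq_singleton_iff.mp h),
        Fin.range_succAbove]
    obtain ⟨g, hg, hgf⟩ :=
      exists_surjective_comp_of_range_eq Fin.succAbove_right_injective hrange
    exact α.exists_eq_comp_shift_of_tail_eq_comp hg hgf
  · rintro ⟨α₁, α₂, rfl⟩
    exact FSGHom.preimage_comp_shift_zero (Finite.injective_iff_surjective.mpr α₁.surj) α₂
  · have hmem : α.f 0 ∈ range (Fin.tail α.f) :=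
      not_not.mp (mt preimage_apply_zero_eq_singleton_iff.mpr h)
    exact α.exists_eq_comp_shift_of_tail_eq_comp (surjective_tail_of_mem_range α.surj hmem)
      (id_comp _).symm

/-- Let `Γ` be a finite group, `x ≥ 2` (the paper's `x` is our `x+2`),
`y ≥ 1` (the paper's `y` is our `y+1`), and `(f,c) : 1+y → x` a morphism of `FS_Γ`.
Let `m = f(1)`.
(i) If `f⁻¹(m) = {1}`, there are `(f₁,c₁) : x → x` of `FS_Γ` (automatically a bijection) and
`(f₂,c₂) : y → x−1` with `(f,c) = (f₁,c₁) ∘ (𝕀⊙(f₂,c₂))`.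
(ii) If `f⁻¹(m) ≠ {1}`, no factorization as in (i) exists, but there are
`(f₁,c₁) : 1+x → x` and `(f₂,c₂) : y → x` with `(f,c) = (f₁,c₁) ∘ (𝕀⊙(f₂,c₂))`. -/
theorem stmt8 {Γ : Type} [Group Γ] [Finite Γ] (x y : ℕ)
    (α : FSGHom Γ (y + 1 + 1) (x + 2)) :
    (α.f ⁻¹' {α.f 0} = {0} →
      ∃ (α₁ : FSGHom Γ (x + 2) (x + 2)) (α₂ : FSGHom Γ (y + 1) (x + 1)),
        α = FSGcomp α₁ (FSGshift α₂)) ∧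
    (α.f ⁻¹' {α.f 0} ≠ {0} →
      (¬ ∃ (α₁ : FSGHom Γ (x + 2) (x + 2)) (α₂ : FSGHom Γ (y + 1) (x + 1)),
        α = FSGcomp α₁ (FSGshift α₂)) ∧
      (∃ (α₁ : FSGHom Γ (x + 2 + 1) (x + 2)) (α₂ : FSGHom Γ (y + 1) (x + 2)),
        α = FSGcomp α₁ (FSGshift α₂))) := by
  obtain ⟨hiff, hne⟩ := stmt8_general α
  exact ⟨hiff.mp, fun h => ⟨mt hiff.mpr h, hne h⟩⟩
end

section
/- Let Γ be a finite group, x ≥ 2, y ≥ 1, and let (f,c) be a morphism of FS_Γ from 1+y to x. Set z = x−1 if f⁻¹(f(1)) = {1}, and z = x otherwise. Suppose (f,c) = (f₁,c₁) ∘ (𝕀⊙(f₂,c₂)) = (f₁′,c₁′) ∘ (𝕀⊙(f₂′,c₂′)) where (f₁,c₁), (f₁′,c₁′) : 1+z → x and (f₂,c₂), (f₂′,c₂′) : y → z are morphisms of FS_Γ. Then: (a) if (f₁,c₁) = (f₁′,c₁′) then (f₂,c₂) = (f₂′,c₂′); (b) in general there exists a morphism (σ,d) : z → z of FS_Γ (so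 σ is a bijection of [z]) such that (f₁′,c₁′) = (f₁,c₁) ∘ (𝕀⊙(σ,d)) and (f₂,c₂) = (σ,d) ∘ (f₂′,c₂′). -/
theorem surjective_tail_of_preimage_ne {X : Type*} {n : ℕ} {f : Fin (n + 1) → X}
    (hf : Function.Surjective f) (hfib : f ⁻¹' {f 0} ≠ {0}) :
    Function.Surjective (Fin.tail f) := by
  obtain ⟨r, hr⟩ : ∃ r : Fin n, f r.succ = f 0 := by
    by_contra! hne
    exact hfib (Set.ext (Fin.cases (by simp) fun r => by simpa using hne r))
  intro b
  obtain ⟨m, rfl⟩ := hf b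
  cases m using Fin.cases with
  | zero => exact ⟨r, hr⟩
  | succ t => exact ⟨t, rfl⟩

namespace FSGHom

variable {Γ : Type} [Group Γ] {w x y z : ℕ}

theorem comp_assoc (α : FSGHom Γ y x) (β : FSGHom Γ z y) (γ : FSGHom Γ w z) :
    FSGcomp (FSGcomp α β) γ = FSGcomp α (FSGcomp β γ) :=
  FSGHom.ext rfl (funext fun _ => mul_assoc _ _ _)

theorem eq_comp_shift_iff {α : FSGHom Γ (y + 1) x} {β : FSGHom Γ (z + 1) x} {γ : FSGHom Γ y z} :
    α = FSGcomp β (FSGshift γ) ↔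
      (α.f 0 = β.f 0 ∧ ∀ r, α.f r.succ = β.f (γ.f r).succ) ∧
        (α.c 0 = β.c 0 ∧ ∀ r, α.c r.succ = β.c (γ.f r).succ * γ.c r) := by
  simp only [FSGHom.ext_iff, funext_iff, Fin.forall_fin_succ, FSGcomp, FSGshift,
    Function.comp_apply, Fin.cases_zero, Fin.cases_succ, Fin.cons_zero, Fin.cons_succ, mul_one]

theorem shift_comp (α : FSGHom Γ y x) (β : FSGHom Γ z y) :
    FSGshift (FSGcomp α β) = FSGcomp (FSGshift α) (FSGshift β) :=
  eq_comp_shift_iff.2 ⟨⟨rfl, fun _ => rfl⟩, rfl, fun _ => rfl⟩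

theorem range_tail_comp_shift (α : FSGHom Γ (z + 1) x) (β : FSGHom Γ y z) :
    Set.range (Fin.tail (FSGcomp α (FSGshift β)).f) = Set.range (Fin.tail α.f) :=
  β.surj.range_comp (Fin.tail α.f)

theorem injective_tail_of_comp_shift {α : FSGHom Γ (z + 1) x} {β : FSGHom Γ y z}
    {γ : FSGHom Γ (y + 1) x} (hγ : γ = FSGcomp α (FSGshift β))
    (hz : (γ.f ⁻¹' {γ.f 0} = {0} → z + 1 = x) ∧ (γ.f ⁻¹' {γ.f 0} ≠ {0} → z = x)) :
    Function.Injective (Fin.tail α.f) := by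
  by_cases hfib : γ.f ⁻¹' {γ.f 0} = {0}
  · obtain rfl := hz.1 hfib
    exact (Finite.injective_iff_surjective.2 α.surj).comp (Fin.succ_injective z)
  · obtain rfl := hz.2 hfib
    have hsurj : Function.Surjective (Fin.tail α.f) := by
      rw [← Set.range_eq_univ, ← range_tail_comp_shift α β, ← hγ, Set.range_eq_univ]
      exact surjective_tail_of_preimage_ne γ.surj hfib
    exact Finite.injective_iff_surjective.2 hsurj

theorem comp_shift_left_cancel {α : FSGHom Γ (z + 1) x} {β β' : FSGHom Γ y z}
    (hα : Function.Injective (Fin.tail α.f))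
    (h : FSGcomp α (FSGshift β) = FSGcomp α (FSGshift β')) : β = β' := by
  obtain ⟨⟨-, hf⟩, -, hc⟩ := eq_comp_shift_iff.1 h
  have hβf : β.f = β'.f := funext fun r => hα (hf r)
  refine FSGHom.ext hβf (funext fun r => ?_)
  have hr : α.c (β.f r).succ * β.c r = α.c (β'.f r).succ * β'.c r := hc r
  rw [hβf] at hr
  exact mul_left_cancel hr

theorem exists_eq_comp_shift {α : FSGHom Γ (z + 1) x} {β : FSGHom Γ (y + 1) x}
    (hα : Function.Injective (Fin.tail α.f)) (hf : β.f 0 = α.f 0) (hc : β.c 0 = α.c 0)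
    (hrange : Set.range (Fin.tail β.f) = Set.range (Fin.tail α.f)) :
    ∃ σ : FSGHom Γ y z, β = FSGcomp α (FSGshift σ) := by
  obtain ⟨s, hs⟩ := Set.range_subset_range_iff_exists_comp.1 hrange.le
  have s_surj : Function.Surjective s := by
    intro a
    obtain ⟨t, ht⟩ := hrange.ge (Set.mem_range_self a)
    exact ⟨t, hα ((congrFun hs t).symm.trans ht)⟩
  refine ⟨⟨s, s_surj, fun t => (α.c (s t).succ)⁻¹ * β.c t.succ⟩, eq_comp_shift_iff.2 ?_⟩
  exact ⟨⟨hf, congrFun hs⟩, hc, fun t => (mul_inv_cancel_left _ _).symm⟩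

end FSGHom

open FSGHom in
theorem stmt9_general {Γ : Type} [Group Γ] {x y z : ℕ} {α : FSGHom Γ (y + 1) x}
    (hz : (α.f ⁻¹' {α.f 0} = {0} → z + 1 = x) ∧ (α.f ⁻¹' {α.f 0} ≠ {0} → z = x))
    {α₁ α₁' : FSGHom Γ (z + 1) x} {α₂ α₂' : FSGHom Γ y z}
    (h : α = FSGcomp α₁ (FSGshift α₂)) (h' : α = FSGcomp α₁' (FSGshift α₂')) :
    (α₁ = α₁' → α₂ = α₂') ∧
    (∃ σ : FSGHom Γ z z,
      α₁' = FSGcomp α₁ (FSGshift σ) ∧ α₂ = FSGcomp σ α₂') := by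
  have hinj : Function.Injective (Fin.tail α₁.f) := injective_tail_of_comp_shift h hz
  obtain ⟨⟨hf, -⟩, hc, -⟩ := eq_comp_shift_iff.1 h
  obtain ⟨⟨hf', -⟩, hc', -⟩ := eq_comp_shift_iff.1 h'
  have hrange : Set.range (Fin.tail α₁'.f) = Set.range (Fin.tail α₁.f) := by
    rw [← range_tail_comp_shift α₁ α₂, ← range_tail_comp_shift α₁' α₂', ← h, ← h']
  constructor
  · rintro rfl
    exact comp_shift_left_cancel hinj (h.symm.trans h')
  · obtain ⟨σ, rfl⟩ :=
      exists_eq_comp_shift hinj (hf'.symm.trans hf) (hc'.symm.trans hc) hrange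
    refine ⟨σ, rfl, comp_shift_left_cancel hinj ?_⟩
    rw [shift_comp, ← comp_assoc, ← h, ← h']

/-- Let `Γ` be a finite group, `x ≥ 2` (the paper's `x` is our `x+2`),
`y ≥ 1` (the paper's `y` is our `y+1`), and `(f,c) : 1+y → x` a morphism of `FS_Γ`.
Set `z = x−1` if `f⁻¹(f(1)) = {1}` and `z = x` otherwise.  Given two factorizations
`(f,c) = (f₁,c₁) ∘ (𝕀⊙(f₂,c₂)) = (f₁′,c₁′) ∘ (𝕀⊙(f₂′,c₂′))` through `z`:
(a) if `(f₁,c₁) = (f₁′,c₁′)` then `(f₂,c₂) = (f₂′,c₂′)`;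
(b) there is a morphism `(σ,d) : z → z` of `FS_Γ` (automatically a bijection of `[z]`) with
`(f₁′,c₁′) = (f₁,c₁) ∘ (𝕀⊙(σ,d))` and `(f₂,c₂) = (σ,d) ∘ (f₂′,c₂′)`. -/
theorem stmt9 {Γ : Type} [Group Γ] [Finite Γ] (x y z : ℕ)
    (α : FSGHom Γ (y + 1 + 1) (x + 2))
    (hz : (α.f ⁻¹' {α.f 0} = {0} → z = x + 1) ∧ (α.f ⁻¹' {α.f 0} ≠ {0} → z = x + 2))
    (α₁ α₁' : FSGHom Γ (z + 1) (x + 2)) (α₂ α₂' : FSGHom Γ (y + 1) z)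
    (h : α = FSGcomp α₁ (FSGshift α₂)) (h' : α = FSGcomp α₁' (FSGshift α₂')) :
    (α₁ = α₁' → α₂ = α₂') ∧
    (∃ σ : FSGHom Γ z z,
      α₁' = FSGcomp α₁ (FSGshift σ) ∧ α₂ = FSGcomp σ α₂') :=
  stmt9_general (hz.imp_left fun h₀ hfib => congrArg (· + 1) (h₀ hfib)) h h'
end

section
/- Let Γ be a finite group and x ≥ 2. Then there exists a family of bijections Θ_y : ([x] × Γ × FS_Γ(y,x)) ⊔ ([x] × Γ × FS_Γ(y,x−1)) → FS_Γ(1+y,x), one for each integer y ≥ 1, such that for every morphism (g,e) : y′ → y of FS_Γ one has Θ_{y′}(m, γ, α∘(g,e)) = Θ_y(m, γ, α) ∘ (𝕀⊙(g,e)) for every m ∈ [x], γ ∈ Γ, α ∈ FS_Γ(y,x), and Θ_{y′}(m, γ, β∘(g,e)) = Θ_y(m, γ, β) ∘ (𝕀⊙(g,e)) for every m ∈ [x], γ ∈ Γ, β ∈ FS_Γ(y,x−1). -/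
/-!
Restrict a morphism `η : [1+y] → [x]` to the last `y` points. Either the restriction is still
surjective, and it is an arbitrary morphism to `[x]`, or it misses exactly the value `m` of `η` at
`1`, and it is an arbitrary morphism to `[x] ∖ {m} ≅ [x-1]`. In both cases `m` and the label of `1`
are free. Precomposing `η` with `𝕀 ⊙ g` leaves `1` alone and precomposes the restriction with `g`,
which is the naturality.
-/

open Function Set

theorem surjective_finCons_iff {n : ℕ} {A : Type*} {a : A} {f : Fin n → A} :
    Surjective (Fin.cons a f : Fin (n + 1) → A) ↔ Surjective f ∨ range f = {a}ᶜ := by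
  rw [← range_eq_univ, ← range_eq_univ, Fin.range_cons]
  constructor
  · intro h
    by_cases ha : a ∈ range f
    · exact .inl (by rwa [insert_eq_of_mem ha] at h)
    · exact .inr (by rw [← insert_sdiff_self_of_notMem ha, h, compl_eq_univ_sdiff])
  · rintro (h | h)
    · rw [h, insert_eq_of_mem (mem_univ a)]
    · rw [h, insert_eq, union_compl_self]

theorem range_succAbove_comp_eq_iff {ι : Type*} {n : ℕ} {m : Fin (n + 1)} {f : ι → Fin n} :
    range (m.succAbove ∘ f) = {m}ᶜ ↔ Surjective f := by
  rw [range_comp, ← Fin.range_succAbove, ← image_univ (f := m.succAbove),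
    (Fin.succAbove_right_injective (p := m)).image_injective.eq_iff, range_eq_univ]

namespace FSGHom

variable {Γ : Type} {x y : ℕ}

/-- The extension of a morphism `[y] → [x]` to `[1+y]` that sends the new point `1` to `m` with
label `γ`. Together with `consSuccAbove` it makes up the bijection `Θ`. -/
def cons (m : Fin x) (γ : Γ) (α : FSGHom Γ y x) : FSGHom Γ (y + 1) x where
  f := Fin.cons m α.f
  surj := surjective_finCons_iff.2 (.inl α.surj)
  c := Fin.cons γ α.c

/-- The extension of a morphism `[y] → [x]` to a morphism `[1+y] → [1+x]` in which the new point `1`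
has label `γ` and is the only preimage of `m`; the old points are sent to `[1+x] ∖ {m}`, which is
identified with `[x]` by the increasing bijection. -/
def consSuccAbove (m : Fin (x + 1)) (γ : Γ) (β : FSGHom Γ y x) : FSGHom Γ (y + 1) (x + 1) where
  f := Fin.cons m (m.succAbove ∘ β.f)
  surj := surjective_finCons_iff.2 (.inr (range_succAbove_comp_eq_iff.2 β.surj))
  c := Fin.cons γ β.c

theorem cons_inj {m m' : Fin x} {γ γ' : Γ} {α α' : FSGHom Γ y x} :
    cons m γ α = cons m' γ' α' ↔ m = m' ∧ γ = γ' ∧ α = α' := by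
  simp only [cons, Fin.cons_inj, FSGHom.ext_iff]
  tauto

theorem consSuccAbove_inj {m m' : Fin (x + 1)} {γ γ' : Γ} {β β' : FSGHom Γ y x} :
    consSuccAbove m γ β = consSuccAbove m' γ' β' ↔ m = m' ∧ γ = γ' ∧ β = β' := by
  simp only [consSuccAbove, Fin.cons_inj, FSGHom.ext_iff]
  constructor
  · rintro ⟨⟨rfl, hf⟩, rfl, hc⟩
    exact ⟨rfl, rfl, Fin.succAbove_right_injective.comp_left hf, hc⟩
  · rintro ⟨rfl, rfl, hf, hc⟩
    exact ⟨⟨rfl, by rw [hf]⟩, rfl, hc⟩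

theorem cons_ne_consSuccAbove (m m' : Fin (x + 1)) (γ γ' : Γ) (α : FSGHom Γ y (x + 1))
    (β : FSGHom Γ y x) : cons m γ α ≠ consSuccAbove m' γ' β := by
  intro h
  have tail_eq : α.f = m'.succAbove ∘ β.f :=
    (Fin.cons_inj (α := fun _ ↦ Fin (x + 1)).1 (congrArg f h)).2
  obtain ⟨r, hr⟩ := α.surj m'
  exact m'.succAbove_ne (β.f r) ((congrFun tail_eq r).symm.trans hr)

theorem exists_eq_cons_or_consSuccAbove (η : FSGHom Γ (y + 1) (x + 1)) :
    (∃ m γ α, cons m γ α = η) ∨ ∃ m γ β, consSuccAbove m γ β = η := by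
  have cons_tail_surj : Surjective (Fin.cons (η.f 0) (Fin.tail η.f) : Fin (y + 1) → _) := by
    rw [Fin.cons_self_tail]
    exact η.surj
  rcases surjective_finCons_iff.1 cons_tail_surj with tail_surj | range_tail
  · exact .inl ⟨η.f 0, η.c 0, ⟨Fin.tail η.f, tail_surj, Fin.tail η.c⟩,
      FSGHom.ext (Fin.cons_self_tail _) (Fin.cons_self_tail _)⟩
  · obtain ⟨b, hb⟩ : ∃ b, Fin.tail η.f = (η.f 0).succAbove ∘ b := by
      rw [← range_subset_range_iff_exists_comp, Fin.range_succAbove, range_tail]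
    have b_surj : Surjective b := range_succAbove_comp_eq_iff.1 (hb ▸ range_tail)
    refine .inr ⟨η.f 0, η.c 0, ⟨b, b_surj, Fin.tail η.c⟩, FSGHom.ext ?_ (Fin.cons_self_tail _)⟩
    change Fin.cons (η.f 0) ((η.f 0).succAbove ∘ b) = η.f
    rw [← hb, Fin.cons_self_tail]

theorem bijective_sumElim_cons_consSuccAbove :
    Bijective (Sum.elim (fun p ↦ cons p.1 p.2.1 p.2.2) fun p ↦ consSuccAbove p.1 p.2.1 p.2.2 :
      (Fin (x + 1) × Γ × FSGHom Γ y (x + 1)) ⊕ (Fin (x + 1) × Γ × FSGHom Γ y x) →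
        FSGHom Γ (y + 1) (x + 1)) := by
  refine ⟨Injective.sumElim ?_ ?_ fun p q ↦ cons_ne_consSuccAbove _ _ _ _ _ _, fun η ↦ ?_⟩
  · exact fun p q h ↦ by simpa only [Prod.ext_iff] using cons_inj.1 h
  · exact fun p q h ↦ by simpa only [Prod.ext_iff] using consSuccAbove_inj.1 h
  · obtain ⟨m, γ, α, h⟩ | ⟨m, γ, β, h⟩ := exists_eq_cons_or_consSuccAbove η
    · exact ⟨.inl (m, γ, α), h⟩
    · exact ⟨.inr (m, γ, β), h⟩

variable [Group Γ] {y' : ℕ}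

theorem cons_FSGcomp (m : Fin x) (γ : Γ) (α : FSGHom Γ y x) (g : FSGHom Γ y' y) :
    cons m γ (FSGcomp α g) = FSGcomp (cons m γ α) (FSGshift g) := by
  ext r <;> cases r using Fin.cases <;> simp [cons, FSGcomp, FSGshift]

theorem consSuccAbove_FSGcomp (m : Fin (x + 1)) (γ : Γ) (β : FSGHom Γ y x) (g : FSGHom Γ y' y) :
    consSuccAbove m γ (FSGcomp β g) = FSGcomp (consSuccAbove m γ β) (FSGshift g) := by
  ext r <;> cases r using Fin.cases <;> simp [consSuccAbove, FSGcomp, FSGshift]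

end FSGHom

theorem stmt10_general (Γ : Type) [Group Γ] (x : ℕ) :
    ∃ Θ : ∀ y : ℕ,
        ((Fin (x + 1) × Γ × FSGHom Γ y (x + 1)) ⊕ (Fin (x + 1) × Γ × FSGHom Γ y x)) ≃
          FSGHom Γ (y + 1) (x + 1),
      ∀ (y y' : ℕ) (g : FSGHom Γ y' y),
        (∀ (m : Fin (x + 1)) (γ : Γ) (α : FSGHom Γ y (x + 1)),
          Θ y' (Sum.inl (m, γ, FSGcomp α g)) = FSGcomp (Θ y (Sum.inl (m, γ, α))) (FSGshift g)) ∧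
        (∀ (m : Fin (x + 1)) (γ : Γ) (β : FSGHom Γ y x),
          Θ y' (Sum.inr (m, γ, FSGcomp β g)) =
            FSGcomp (Θ y (Sum.inr (m, γ, β))) (FSGshift g)) :=
  ⟨fun _ ↦ Equiv.ofBijective _ FSGHom.bijective_sumElim_cons_consSuccAbove, fun _ _ g ↦
    ⟨fun m γ α ↦ FSGHom.cons_FSGcomp m γ α g, fun m γ β ↦ FSGHom.consSuccAbove_FSGcomp m γ β g⟩⟩

/-- Let `Γ` be a finite group and `x ≥ 2` (the paper's `x` is our `x+2`,
so the paper's `[x]` is `Fin (x+2)` and the paper's `x−1` is our `x+1`).  There is a family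
of bijections `Θ_y : ([x] × Γ × FS_Γ(y,x)) ⊔ ([x] × Γ × FS_Γ(y,x−1)) → FS_Γ(1+y,x)` for
`y ≥ 1` (the paper's `y` is our `y+1`), natural with respect to precomposition: for every
`(g,e) : y′ → y` of `FS_Γ`, `Θ_{y′}(m, γ, α∘(g,e)) = Θ_y(m, γ, α) ∘ (𝕀⊙(g,e))` on both
summands. -/
theorem stmt10 (Γ : Type) [Group Γ] [Finite Γ] (x : ℕ) :
    ∃ Θ : ∀ y : ℕ,
        ((Fin (x + 2) × Γ × FSGHom Γ (y + 1) (x + 2)) ⊕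
          (Fin (x + 2) × Γ × FSGHom Γ (y + 1) (x + 1))) ≃ FSGHom Γ (y + 1 + 1) (x + 2),
      ∀ (y y' : ℕ) (g : FSGHom Γ (y' + 1) (y + 1)),
        (∀ (m : Fin (x + 2)) (γ : Γ) (α : FSGHom Γ (y + 1) (x + 2)),
          Θ y' (Sum.inl (m, γ, FSGcomp α g)) = FSGcomp (Θ y (Sum.inl (m, γ, α))) (FSGshift g)) ∧
        (∀ (m : Fin (x + 2)) (γ : Γ) (β : FSGHom Γ (y + 1) (x + 1)),
          Θ y' (Sum.inr (m, γ, FSGcomp β g)) =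
            FSGcomp (Θ y (Sum.inr (m, γ, β))) (FSGshift g)) := by
  obtain ⟨Θ, natural⟩ := stmt10_general Γ (x + 1)
  exact ⟨fun y ↦ Θ (y + 1), fun y y' g ↦ natural (y + 1) (y' + 1) g⟩
end

section
/- Let Γ be a finite group and x ≥ 2. Then there exists a family of bijections Θ_y : ([x] × Γ × OS_Γ(y,x)) ⊔ (Γ × OS_Γ(y,x−1)) → OS_Γ(1+y,x), one for each integer y ≥ 1, such that for every morphism (g,e) : y′ → y of OS_Γ one has Θ_{y′}(m, γ, α∘(g,e)) = Θ_y(m, γ, α) ∘ (𝕀⊙(g,e)) for every m ∈ [x], γ ∈ Γ, α ∈ OS_Γ(y,x), and Θ_{y′}(γ, β∘(g,e)) = Θ_y(γ, β) ∘ (𝕀⊙(g,e)) for every γ ∈ Γ, β ∈ OS_Γ(y,x−1). -/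
/-- The fiber `f⁻¹(r)` of a surjection in `FS_Γ`, as a finset. -/
def FSGHom.fiber {Γ : Type} {y x : ℕ} (A : FSGHom Γ y x) (r : Fin x) : Finset (Fin y) :=
  Finset.univ.filter (fun i => A.f i = r)

theorem FSGHom.fiber_nonempty {Γ : Type} {y x : ℕ} (A : FSGHom Γ y x) (r : Fin x) :
    (A.fiber r).Nonempty := by
  obtain ⟨i, hi⟩ := A.surj r
  exact ⟨i, by simp [FSGHom.fiber, hi]⟩

/-- A morphism `(f,c)` of `FS_Γ` lies in `OS_Γ` when `f` is an *ordered surjection*: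
for all `r < s` in `[x]`, `min f⁻¹(r) < min f⁻¹(s)`. -/
def FSGHom.IsOrdered {Γ : Type} {y x : ℕ} (A : FSGHom Γ y x) : Prop :=
  ∀ r s : Fin x, r < s →
    (A.fiber r).min' (A.fiber_nonempty r) < (A.fiber s).min' (A.fiber_nonempty s)

/-- Morphisms of `OS_Γ`: morphisms of `FS_Γ` whose underlying surjection is ordered. -/
def OSGHom (Γ : Type) (y x : ℕ) : Type := { A : FSGHom Γ y x // A.IsOrdered }

theorem cycleRange_injective {n : ℕ} [NeZero n] :
    Function.Injective (Fin.cycleRange : Fin n → Equiv.Perm (Fin n)) := by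
  intro m m' h
  apply m'.cycleRange.injective
  rw [Fin.cycleRange_self, ← h, Fin.cycleRange_self]

theorem exists_strictMono_insertNth {α : Type*} [LinearOrder α] {n : ℕ} {v : Fin n → α} {a : α}
    (hv : StrictMono v) (ha : ∀ i, v i ≠ a) :
    ∃ m : Fin (n + 1), StrictMono (m.insertNth a v : Fin (n + 1) → α) := by
  let m : Fin (n + 1) := ⟨Finset.card {i | v i < a},
    Nat.lt_succ_of_le ((Finset.card_le_univ _).trans_eq (Fintype.card_fin n))⟩
  have lt_m_iff (i : Fin n) : i.castSucc < m ↔ v i < a :=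
    Tuple.lt_card_lt_iff_apply_lt_of_monotone hv.monotone
  have lt_of_m_le (i : Fin n) (hi : m ≤ i.castSucc) : a < v i :=
    (not_lt.mp (mt (lt_m_iff i).mpr hi.not_gt)).lt_of_ne' (ha i)
  exact ⟨m, (Fin.strictMono_insertNth_iff m a v).mpr ⟨hv, fun i => (lt_m_iff i).mp, lt_of_m_le⟩⟩

theorem existsUnique_strictMono_comp_cycleRange {α : Type*} [LinearOrder α] {n : ℕ}
    {v : Fin (n + 1) → α} (hv : Function.Injective v) (htail : StrictMono (v ∘ Fin.succ)) :
    ∃! m : Fin (n + 1), StrictMono (v ∘ m.cycleRange) := by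
  have cons_tail : Fin.cons (v 0) (v ∘ Fin.succ) = v := Fin.cons_self_tail v
  obtain ⟨m, hm⟩ := exists_strictMono_insertNth htail fun i h => Fin.succ_ne_zero i (hv h)
  rw [← Fin.cons_comp_cycleRange, cons_tail] at hm
  refine ⟨m, hm, fun m' hm' => cycleRange_injective (Equiv.ext fun k => hv ?_)⟩
  exact congrFun (Tuple.unique_monotone hm'.monotone hm.monotone) k

theorem strictMono_cons_zero_succ_comp_iff {n k : ℕ} {v : Fin n → Fin k} :
    StrictMono (Fin.cons 0 (Fin.succ ∘ v) : Fin (n + 1) → Fin (k + 1)) ↔ StrictMono v := by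
  rw [Fin.strictMono_cons]
  simp [StrictMono]

namespace FSGHom

variable {Γ : Type} {y x : ℕ}

/-- The first-occurrence map `k ↦ min f⁻¹(k)` of a morphism `(f, c)`; it is strictly increasing
exactly when `f` is an ordered surjection. -/
def first (A : FSGHom Γ y x) (k : Fin x) : Fin y :=
  (A.fiber k).min' (A.fiber_nonempty k)

theorem isOrdered_iff_strictMono_first {A : FSGHom Γ y x} : A.IsOrdered ↔ StrictMono A.first :=
  Iff.rfl

theorem isLeast_first (A : FSGHom Γ y x) (k : Fin x) : IsLeast (A.f ⁻¹' {k}) (A.first k) := by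
  have coe_fiber : (A.fiber k : Set (Fin y)) = A.f ⁻¹' {k} := by
    ext i
    simp [fiber]
  exact coe_fiber ▸ (A.fiber k).isLeast_min' (A.fiber_nonempty k)

theorem first_injective (A : FSGHom Γ y x) : Function.Injective A.first :=
  Function.LeftInverse.injective fun k => (A.isLeast_first k).1

theorem first_zero {F : FSGHom Γ (y + 1) (x + 1)} (h0 : F.f 0 = 0) : F.first 0 = 0 :=
  le_antisymm ((F.isLeast_first 0).2 h0) (Fin.zero_le _)

theorem first_succ {F : FSGHom Γ (y + 1) (x + 1)} (h0 : F.f 0 = 0) {k : Fin x} {i : Fin y}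
    (hi : IsLeast (F.f ∘ Fin.succ ⁻¹' {k.succ}) i) : F.first k.succ = i.succ := by
  refine (F.isLeast_first k.succ).unique ⟨hi.1, fun j hj => ?_⟩
  cases j using Fin.cases with
  | zero => exact absurd (h0.symm.trans hj) (Fin.succ_ne_zero k).symm
  | succ j => exact Fin.succ_le_succ_iff.mpr (hi.2 hj)

theorem IsOrdered.f_zero {F : FSGHom Γ (y + 1) (x + 1)} (hF : F.IsOrdered) : F.f 0 = 0 := by
  have first_le : F.first (F.f 0) ≤ F.first 0 :=
    ((F.isLeast_first (F.f 0)).2 rfl).trans (Fin.zero_le _)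
  exact Fin.le_zero_iff.mp ((isOrdered_iff_strictMono_first.mp hF).le_iff_le.mp first_le)

/-- The morphism `(π ∘ f, c)` obtained from `(f, c)` by permuting the values of `f`, used to put
their first occurrences in increasing order. -/
def permute (π : Equiv.Perm (Fin x)) (A : FSGHom Γ y x) : FSGHom Γ y x :=
  ⟨π ∘ A.f, π.surjective.comp A.surj, A.c⟩

theorem permute_symm_permute (π : Equiv.Perm (Fin x)) (A : FSGHom Γ y x) :
    permute π.symm (permute π A) = A := by
  ext <;> simp [permute]

theorem first_permute (π : Equiv.Perm (Fin x)) (A : FSGHom Γ y x) :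
    (permute π A).first = A.first ∘ π.symm := by
  funext k
  have preimage_eq : (permute π A).f ⁻¹' {k} = A.f ⁻¹' {π.symm k} := by
    ext i
    simp [permute, Equiv.eq_symm_apply]
  exact ((permute π A).isLeast_first k).unique (preimage_eq ▸ A.isLeast_first (π.symm k))

/-- The extension of `(f, c) : [y] → [1+x]` to `[1+y]` sending the new element `1` to the value
`1`, which `f` already takes, with label `γ`. -/
def consOld (γ : Γ) (A : FSGHom Γ y (x + 1)) : FSGHom Γ (y + 1) (x + 1) :=
  ⟨Fin.cons 0 A.f, fun k => (A.surj k).imp' Fin.succ fun _ h => h, Fin.cons γ A.c⟩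

/-- The extension of `(f, c) : [y] → [x]` to `[1+y] → [1+x]` in which the new element `1` of the
source is the only one sent to the new value `1`, with label `γ`; for `γ = 1` it is the shift. -/
def consNew (γ : Γ) (B : FSGHom Γ y x) : FSGHom Γ (y + 1) (x + 1) :=
  ⟨Fin.cons 0 (Fin.succ ∘ B.f), shiftSurj B.surj, Fin.cons γ B.c⟩

theorem first_consOld (γ : Γ) (A : FSGHom Γ y (x + 1)) :
    (consOld γ A).first = Fin.cons 0 (Fin.succ ∘ A.first ∘ Fin.succ) := by
  funext k
  cases k using Fin.cases with
  | zero => exact first_zero rfl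
  | succ k => exact first_succ rfl (A.isLeast_first k.succ)

theorem first_consNew (γ : Γ) (B : FSGHom Γ y x) :
    (consNew γ B).first = Fin.cons 0 (Fin.succ ∘ B.first) := by
  funext k
  cases k using Fin.cases with
  | zero => exact first_zero rfl
  | succ k =>
    have preimage_eq : (consNew γ B).f ∘ Fin.succ ⁻¹' {k.succ} = B.f ⁻¹' {k} := by
      ext i
      simp [consNew]
    exact first_succ rfl (preimage_eq ▸ B.isLeast_first k)

theorem isOrdered_consOld_iff {γ : Γ} {A : FSGHom Γ y (x + 1)} :
    (consOld γ A).IsOrdered ↔ StrictMono (A.first ∘ Fin.succ) := by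
  rw [isOrdered_iff_strictMono_first, first_consOld, strictMono_cons_zero_succ_comp_iff]

theorem isOrdered_consNew_iff {γ : Γ} {B : FSGHom Γ y x} :
    (consNew γ B).IsOrdered ↔ B.IsOrdered := by
  rw [isOrdered_iff_strictMono_first, first_consNew, strictMono_cons_zero_succ_comp_iff,
    isOrdered_iff_strictMono_first]

theorem consOld_injective2 : Function.Injective2 (consOld : Γ → FSGHom Γ y (x + 1) → _) := by
  intro γ γ' A A' h
  have tail_f_eq : A.f = A'.f := congrArg (f · ∘ Fin.succ) h
  have tail_c_eq : A.c = A'.c := congrArg (c · ∘ Fin.succ) h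
  exact ⟨congrFun (congrArg c h) 0, FSGHom.ext tail_f_eq tail_c_eq⟩

theorem consNew_injective2 : Function.Injective2 (consNew : Γ → FSGHom Γ y x → _) := by
  intro γ γ' B B' h
  have tail_f_eq : Fin.succ ∘ B.f = Fin.succ ∘ B'.f := congrArg (f · ∘ Fin.succ) h
  have tail_c_eq : B.c = B'.c := congrArg (c · ∘ Fin.succ) h
  exact ⟨congrFun (congrArg c h) 0,
    FSGHom.ext ((Fin.succ_injective x).comp_left tail_f_eq) tail_c_eq⟩

theorem consOld_ne_consNew (γ γ' : Γ) (A : FSGHom Γ y (x + 1)) (B : FSGHom Γ y x) :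
    consOld γ A ≠ consNew γ' B := by
  intro h
  obtain ⟨j, hj⟩ := A.surj 0
  have f_succ : A.f j = (B.f j).succ := congrFun (congrArg f h) j.succ
  exact Fin.succ_ne_zero _ (f_succ.symm.trans hj)

theorem exists_consOld_or_consNew {F : FSGHom Γ (y + 1) (x + 1)} (h0 : F.f 0 = 0) :
    (∃ γ A, consOld γ A = F) ∨ ∃ γ B, consNew γ B = F := by
  have mem_tail (k : Fin (x + 1)) (hk : k ≠ 0) : ∃ j : Fin y, F.f j.succ = k := by
    obtain ⟨i, rfl⟩ := F.surj k
    obtain ⟨j, rfl⟩ := Fin.exists_succ_eq.mpr (ne_of_apply_ne F.f (h0 ▸ hk))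
    exact ⟨j, rfl⟩
  have cons_tail_f : Fin.cons 0 (Fin.tail F.f) = F.f := by rw [← h0, Fin.cons_self_tail]
  by_cases hz : ∃ j : Fin y, F.f j.succ = 0
  · have tail_surj : Function.Surjective (Fin.tail F.f) := fun k => by
      obtain rfl | hk := eq_or_ne k 0
      · exact hz
      · exact mem_tail k hk
    exact .inl ⟨F.c 0, ⟨Fin.tail F.f, tail_surj, Fin.tail F.c⟩,
      FSGHom.ext cons_tail_f (Fin.cons_self_tail F.c)⟩
  · choose t ht using fun j => Fin.exists_succ_eq.mpr (not_exists.mp hz j)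
    have t_surj : Function.Surjective t := fun k => by
      obtain ⟨j, hj⟩ := mem_tail k.succ (Fin.succ_ne_zero k)
      exact ⟨j, Fin.succ_injective x ((ht j).trans hj)⟩
    have succ_comp_t : Fin.succ ∘ t = Fin.tail F.f := funext ht
    exact .inr ⟨F.c 0, ⟨t, t_surj, Fin.tail F.c⟩,
      FSGHom.ext ((congrArg _ succ_comp_t).trans cons_tail_f) (Fin.cons_self_tail F.c)⟩

theorem IsOrdered.consOld_permute_cycleRange {A : FSGHom Γ y (x + 1)} (hA : A.IsOrdered)
    (m : Fin (x + 1)) (γ : Γ) : (consOld γ (permute m.cycleRange A)).IsOrdered := by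
  have first_comp_succ : (permute m.cycleRange A).first ∘ Fin.succ = A.first ∘ m.succAbove := by
    rw [first_permute]
    funext k
    simp only [Function.comp_apply, Fin.cycleRange_symm_succ]
  rw [isOrdered_consOld_iff, first_comp_succ]
  exact (isOrdered_iff_strictMono_first.mp hA).comp (Fin.strictMono_succAbove m)

theorem IsOrdered.existsUnique_permute_cycleRange_symm {γ : Γ} {A : FSGHom Γ y (x + 1)}
    (hA : (consOld γ A).IsOrdered) :
    ∃! m : Fin (x + 1), (permute m.cycleRange.symm A).IsOrdered := by
  simpa only [isOrdered_iff_strictMono_first, first_permute, Equiv.symm_symm] using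
    existsUnique_strictMono_comp_cycleRange A.first_injective (isOrdered_consOld_iff.mp hA)

theorem consOld_comp [Group Γ] {y' : ℕ} (γ : Γ) (A : FSGHom Γ y (x + 1)) (g : FSGHom Γ y' y) :
    consOld γ (FSGcomp A g) = FSGcomp (consOld γ A) (FSGshift g) := by
  ext j <;> cases j using Fin.cases <;> simp [consOld, FSGcomp, FSGshift]

theorem consNew_comp [Group Γ] {y' : ℕ} (γ : Γ) (B : FSGHom Γ y x) (g : FSGHom Γ y' y) :
    consNew γ (FSGcomp B g) = FSGcomp (consNew γ B) (FSGshift g) := by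
  ext j <;> cases j using Fin.cases <;> simp [consNew, FSGcomp, FSGshift]

end FSGHom

namespace OSGHom

open FSGHom

variable {Γ : Type} {y x : ℕ}

/-- The map `Θ_y`, for `x + 1` in place of the paper's `x` so that its `x-1` is our `x`: a triple
`(m, γ, A)` is sent to `A` with its values permuted by the cycle `m.cycleRange`, which takes `m` to
the smallest value, and then extended by `consOld γ`; a pair `(γ, B)` is sent to `consNew γ B`. -/
def extend : (Fin (x + 1) × Γ × OSGHom Γ y (x + 1)) ⊕ (Γ × OSGHom Γ y x) →
    OSGHom Γ (y + 1) (x + 1)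
  | .inl (m, γ, A) => ⟨consOld γ (permute m.cycleRange A.1), A.2.consOld_permute_cycleRange m γ⟩
  | .inr (γ, B) => ⟨consNew γ B.1, isOrdered_consNew_iff.mpr B.2⟩

theorem extend_inl_injective :
    Function.Injective fun p => (extend (.inl p) : OSGHom Γ (y + 1) (x + 1)) := by
  rintro ⟨m, γ, A⟩ ⟨m', γ', A'⟩ h
  obtain ⟨rfl, hperm⟩ := consOld_injective2 (congrArg Subtype.val h)
  have hm : (permute m.cycleRange.symm (permute m.cycleRange A.1)).IsOrdered := by
    rw [permute_symm_permute]
    exact A.2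
  have hm' : (permute m'.cycleRange.symm (permute m.cycleRange A.1)).IsOrdered := by
    rw [hperm, permute_symm_permute]
    exact A'.2
  obtain rfl : m = m' :=
    (A.2.consOld_permute_cycleRange m γ).existsUnique_permute_cycleRange_symm.unique hm hm'
  obtain rfl : A = A' := Subtype.ext <|
    (Function.LeftInverse.injective (permute_symm_permute m.cycleRange)) hperm
  rfl

theorem extend_inr_injective :
    Function.Injective fun p => (extend (.inr p) : OSGHom Γ (y + 1) (x + 1)) := by
  rintro ⟨γ, B⟩ ⟨γ', B'⟩ h
  obtain ⟨rfl, hB⟩ := consNew_injective2 (congrArg Subtype.val h)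
  rw [Subtype.ext hB]

theorem extend_injective :
    Function.Injective (extend : _ → OSGHom Γ (y + 1) (x + 1)) := by
  rintro (p | p) (q | q) h
  · exact congrArg Sum.inl (extend_inl_injective h)
  · exact absurd (congrArg Subtype.val h) (consOld_ne_consNew _ _ _ _)
  · exact absurd (congrArg Subtype.val h.symm) (consOld_ne_consNew _ _ _ _)
  · exact congrArg Sum.inr (extend_inr_injective h)

theorem extend_surjective :
    Function.Surjective (extend : _ → OSGHom Γ (y + 1) (x + 1)) := by
  rintro ⟨F, hF⟩
  obtain ⟨γ, A, rfl⟩ | ⟨γ, B, rfl⟩ := exists_consOld_or_consNew hF.f_zero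
  · obtain ⟨m, hm, -⟩ := hF.existsUnique_permute_cycleRange_symm
    exact ⟨.inl (m, γ, ⟨_, hm⟩),
      Subtype.ext (congrArg (consOld γ) (permute_symm_permute m.cycleRange.symm A))⟩
  · exact ⟨.inr (γ, ⟨B, isOrdered_consNew_iff.mp hF⟩), rfl⟩

end OSGHom

theorem stmt12_general (Γ : Type) [Group Γ] (x : ℕ) :
    ∃ Θ : ∀ y : ℕ,
        ((Fin (x + 1) × Γ × OSGHom Γ y (x + 1)) ⊕ (Γ × OSGHom Γ y x)) ≃ OSGHom Γ (y + 1) (x + 1),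
      ∀ (y y' : ℕ) (g : FSGHom Γ y' y),
        (∀ (m : Fin (x + 1)) (γ : Γ) (A : OSGHom Γ y (x + 1)) (h : (FSGcomp A.1 g).IsOrdered),
          (Θ y' (Sum.inl (m, γ, ⟨FSGcomp A.1 g, h⟩))).1 =
            FSGcomp (Θ y (Sum.inl (m, γ, A))).1 (FSGshift g)) ∧
        (∀ (γ : Γ) (B : OSGHom Γ y x) (h : (FSGcomp B.1 g).IsOrdered),
          (Θ y' (Sum.inr (γ, ⟨FSGcomp B.1 g, h⟩))).1 =
            FSGcomp (Θ y (Sum.inr (γ, B))).1 (FSGshift g)) :=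
  ⟨fun _ => Equiv.ofBijective OSGHom.extend ⟨OSGHom.extend_injective, OSGHom.extend_surjective⟩,
    fun _ _ g => ⟨fun m γ A _ => FSGHom.consOld_comp γ (A.1.permute m.cycleRange) g,
      fun γ B _ => FSGHom.consNew_comp γ B.1 g⟩⟩

/-- Let `Γ` be a finite group and `x ≥ 2` (the paper's `x` is our `x+2`,
so the paper's `[x]` is `Fin (x+2)` and the paper's `x−1` is our `x+1`).  There is a family
of bijections `Θ_y : ([x] × Γ × OS_Γ(y,x)) ⊔ (Γ × OS_Γ(y,x−1)) → OS_Γ(1+y,x)` for `y ≥ 1`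
(the paper's `y` is our `y+1`), natural with respect to precomposition: for every
`(g,e) : y′ → y` of `OS_Γ`, `Θ_{y′}(m, γ, α∘(g,e)) = Θ_y(m, γ, α) ∘ (𝕀⊙(g,e))` and
`Θ_{y′}(γ, β∘(g,e)) = Θ_y(γ, β) ∘ (𝕀⊙(g,e))`.  (Composites of morphisms of `OS_Γ` are
morphisms of `OS_Γ`; here the proof `h` that the composite is ordered is taken as a
hypothesis, and the equations are stated between the underlying `FS_Γ`-morphisms.) -/
theorem stmt12 (Γ : Type) [Group Γ] [Finite Γ] (x : ℕ) :
    ∃ Θ : ∀ y : ℕ,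
        ((Fin (x + 2) × Γ × OSGHom Γ (y + 1) (x + 2)) ⊕
          (Γ × OSGHom Γ (y + 1) (x + 1))) ≃ OSGHom Γ (y + 1 + 1) (x + 2),
      ∀ (y y' : ℕ) (g : OSGHom Γ (y' + 1) (y + 1)),
        (∀ (m : Fin (x + 2)) (γ : Γ) (A : OSGHom Γ (y + 1) (x + 2))
          (h : (FSGcomp A.1 g.1).IsOrdered),
          (Θ y' (Sum.inl (m, γ, ⟨FSGcomp A.1 g.1, h⟩))).1 =
            FSGcomp (Θ y (Sum.inl (m, γ, A))).1 (FSGshift g.1)) ∧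
        (∀ (γ : Γ) (B : OSGHom Γ (y + 1) (x + 1)) (h : (FSGcomp B.1 g.1).IsOrdered),
          (Θ y' (Sum.inr (γ, ⟨FSGcomp B.1 g.1, h⟩))).1 =
            FSGcomp (Θ y (Sum.inr (γ, B))).1 (FSGshift g.1)) := by
  obtain ⟨Θ, hΘ⟩ := stmt12_general Γ (x + 1)
  exact ⟨fun y => Θ (y + 1), fun y y' g => hΘ (y + 1) (y' + 1) g.1⟩
end

section
/- Let F be a finite field with q elements and let x ≥ 1. Let Λ = Hom_F(F^x, F) be the space of linear functionals on F^x, and let M be the set of pairs (u, L) where u ∈ Hom_F(F^x, F) and L is a 1-dimensional subspace of F^x with L not contained in ker u. Then there exists a family of bijections Θ_y : (Λ × VI(x,y)) ⊔ (M × VI(x−1,y)) → VI(x,1+y), one for each integer y ≥ 0, such that for every injective F-linear map g : F^y → F^{y′} one has Θ_{y′}(λ, g∘α) = (id_F ⊕ g) ∘ Θ_y(λ, α) for every λ ∈ Λ, α ∈ VI(x,y), and Θ_{y′}((u,L), g∘β) = (id_F ⊕ g) ∘ Θ_y((u,L), β) for every (u,L) ∈ M, β ∈ VI(x−1,y). (Here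 |Λ| = q^x and |M| = (q^x − 1)q^{x−1}.) -/
/-- The linear map `id_F ⊕ g : F^{1+a} = F ⊕ F^a → F ⊕ F^b = F^{1+b}` associated to a linear
map `g : F^a → F^b`; we model `F^n` as `Fin n → F`, with the first summand `F` corresponding
to the coordinate `0`. -/
def oplus {F : Type} [Field F] {a b : ℕ} (g : (Fin a → F) →ₗ[F] (Fin b → F)) :
    (Fin (a + 1) → F) →ₗ[F] (Fin (b + 1) → F) where
  toFun v := Fin.cons (v 0) (g (v ∘ Fin.succ))
  map_add' u v := by
    have h : (u + v) ∘ Fin.succ = u ∘ Fin.succ + v ∘ Fin.succ := rfl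
    funext i
    induction i using Fin.cases with
    | zero => simp
    | succ i => simp [h]
  map_smul' t v := by
    have h : (t • v) ∘ Fin.succ = t • (v ∘ Fin.succ) := rfl
    funext i
    induction i using Fin.cases with
    | zero => simp
    | succ i => simp [h]

/-- The projection `π : F^{1+y} = F ⊕ F^y → F^y` onto the second summand. -/
def sndProj (F : Type) [Field F] (y : ℕ) : (Fin (y + 1) → F) →ₗ[F] (Fin y → F) :=
  LinearMap.funLeft F F Fin.succ

theorem oplus_injective {F : Type} [Field F] {a b : ℕ}
    {g : (Fin a → F) →ₗ[F] (Fin b → F)} (hg : Function.Injective g) :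
    Function.Injective (oplus g) := by
  intro u v huv
  have h0 : u 0 = v 0 := by
    have := congrFun huv 0
    simpa [oplus] using this
  have hs : u ∘ Fin.succ = v ∘ Fin.succ := by
    apply hg
    funext i
    have := congrFun huv i.succ
    simpa [oplus] using this
  funext i
  induction i using Fin.cases with
  | zero => exact h0
  | succ i => exact congrFun hs i

/-- The set of injective linear maps `F^a → F^b`. -/
def VIHom (F : Type) [Field F] (a b : ℕ) : Type :=
  { g : (Fin a → F) →ₗ[F] (Fin b → F) // Function.Injective g }

/-- Composition of injective linear maps. -/
def VIcomp {F : Type} [Field F] {a b c : ℕ} (g : VIHom F b c) (α : VIHom F a b) :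
    VIHom F a c :=
  ⟨g.1.comp α.1, g.2.comp α.2⟩

/-- `id_F ⊕ g` as an injective linear map. -/
def VIshift {F : Type} [Field F] {a b : ℕ} (g : VIHom F a b) : VIHom F (a + 1) (b + 1) :=
  ⟨oplus g.1, oplus_injective g.2⟩

/-! An injective map `V → K ⊕ W` is a pair `(u, ψ)` with `ker u ⊓ ker ψ = ⊥`. Hence `u` embeds
`ker ψ` in `K`, so either `ψ` is injective and `u` is arbitrary, or `ker ψ` is a line on which `u`
does not vanish and `ψ` is an injective map on `V ⧸ ker ψ`. This dichotomy involves no choice and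
does not see injective maps applied after `ψ`; choosing coordinates on each quotient `V ⧸ L`
independently of `W` keeps the naturality. For the count, a line `L` not in `ker u` has a unique
vector `v` with `u v = 1`, so `M` is the set of pairs `(u, v)` with `u v = 1`: each `u ≠ 0`
contributes a coset of the hyperplane `ker u`. -/

open Module Submodule

section Prod

theorem linearMap_prod_inj {R M N P : Type*} [Semiring R] [AddCommMonoid M] [AddCommMonoid N]
    [AddCommMonoid P] [Module R M] [Module R N] [Module R P] {f f' : M →ₗ[R] N}
    {g g' : M →ₗ[R] P} : f.prod g = f'.prod g' ↔ f = f' ∧ g = g' :=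
  (LinearMap.prodEquiv ℕ).injective.eq_iff.trans (Prod.mk_inj (a₁ := f) (b₁ := g))

variable {R M N P : Type*} [Ring R] [AddCommGroup M] [AddCommGroup N] [AddCommGroup P]
  [Module R M] [Module R N] [Module R P]

theorem injective_prod_iff_disjoint_ker {f : M →ₗ[R] N} {g : M →ₗ[R] P} :
    Function.Injective (f.prod g) ↔ Disjoint (LinearMap.ker f) (LinearMap.ker g) := by
  rw [← LinearMap.ker_eq_bot, LinearMap.ker_prod, disjoint_iff]

theorem ker_comp_mkQ {L : Submodule R M} {β : M ⧸ L →ₗ[R] N} (hβ : Function.Injective β) :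
    LinearMap.ker (β ∘ₗ L.mkQ) = L := by
  rw [LinearMap.ker_comp_of_ker_eq_bot _ (LinearMap.ker_eq_bot.2 hβ), ker_mkQ]

end Prod

section Splitting

variable {K V W : Type*} [DivisionRing K] [AddCommGroup V] [Module K V] [AddCommGroup W]
  [Module K W]

theorem disjoint_ker_iff_of_finrank_eq_one {u : Dual K V} {L : Submodule K V}
    (hL : finrank K L = 1) : Disjoint (LinearMap.ker u) L ↔ ¬ L ≤ LinearMap.ker u := by
  have hatom : IsAtom L := isSimpleModule_iff_isAtom.1 (isSimpleModule_iff_finrank_eq_one.2 hL)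
  rw [hatom.not_le_iff_disjoint, disjoint_comm]

theorem finrank_eq_one_of_disjoint_ker {u : Dual K V} {L : Submodule K V} (hL : L ≠ ⊥)
    (h : Disjoint (LinearMap.ker u) L) : finrank K L = 1 := by
  have hinj : Function.Injective (u.domRestrict L) := by
    rw [← LinearMap.ker_eq_bot, LinearMap.ker_domRestrict, ← disjoint_iff_comap_eq_bot]
    exact h.symm
  have hne : u.domRestrict L ≠ 0 := fun h0 =>
    hL (h.eq_bot_of_ge (LinearMap.le_ker_iff_comp_subtype_eq_zero.2 h0))
  exact (LinearEquiv.ofBijective _ ⟨hinj, LinearMap.surjective hne⟩).finrank_eq.trans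
    (finrank_self K)

variable (K V W) in
/-- The set of injective linear maps `V → W`, a coordinate-free `VIHom`. -/
abbrev InjLinearMap : Type _ :=
  { f : V →ₗ[K] W // Function.Injective f }

variable (K V) in
/-- The pairs `(u, L)` of a functional `u` on `V` and a line `L` on which `u` does not vanish: the
set `M` of the theorem, for an arbitrary vector space. -/
abbrev TransverseLine : Type _ :=
  { uL : Dual K V × Submodule K V // finrank K uL.2 = 1 ∧ ¬ uL.2 ≤ LinearMap.ker uL.1 }

namespace TransverseLine

theorem line_ne_bot (m : TransverseLine K V) : m.1.2 ≠ ⊥ :=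
  fun h => m.2.2 (h ▸ bot_le)

theorem disjoint_ker (m : TransverseLine K V) : Disjoint (LinearMap.ker m.1.1) m.1.2 :=
  (disjoint_ker_iff_of_finrank_eq_one m.2.1).2 m.2.2

end TransverseLine

/-- The map `(u, α) ↦ (u, α)`, `((u, L), β) ↦ (u, β ∘ (V → V ⧸ L))` that enumerates the injective
maps `V → K ⊕ W`. -/
def injLinearMapProdMk :
    Dual K V × InjLinearMap K V W ⊕ (Σ m : TransverseLine K V, InjLinearMap K (V ⧸ m.1.2) W) →
      InjLinearMap K V (K × W)
  | .inl (u, α) => ⟨u.prod α.1, injective_prod_iff_disjoint_ker.2 <| by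
      rw [LinearMap.ker_eq_bot.2 α.2]; exact disjoint_bot_right⟩
  | .inr ⟨m, β⟩ => ⟨m.1.1.prod (β.1 ∘ₗ m.1.2.mkQ), injective_prod_iff_disjoint_ker.2 <| by
      rw [ker_comp_mkQ β.2]; exact m.disjoint_ker⟩

theorem injLinearMapProdMk_injective :
    Function.Injective (injLinearMapProdMk (K := K) (V := V) (W := W)) := by
  rintro (⟨u, α⟩ | ⟨⟨⟨u, L⟩, hL⟩, β⟩) (⟨u', α'⟩ | ⟨⟨⟨u', L'⟩, hL'⟩, β'⟩) h <;>
    obtain ⟨hu : u = u', hψ⟩ := linearMap_prod_inj.1 (congrArg Subtype.val h) <;>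
    subst hu <;>
    have hker := congrArg LinearMap.ker hψ
  · rw [Subtype.ext hψ]
  · rw [LinearMap.ker_eq_bot.2 α.2, ker_comp_mkQ β'.2] at hker
    exact absurd hker.symm (TransverseLine.line_ne_bot ⟨(u, L'), hL'⟩)
  · rw [LinearMap.ker_eq_bot.2 α'.2, ker_comp_mkQ β.2] at hker
    exact absurd hker (TransverseLine.line_ne_bot ⟨(u, L), hL⟩)
  · obtain rfl : L = L' := by rwa [ker_comp_mkQ β.2, ker_comp_mkQ β'.2] at hker
    rw [Subtype.ext (linearMap_qext _ hψ)]

theorem injLinearMapProdMk_surjective :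
    Function.Surjective (injLinearMapProdMk (K := K) (V := V) (W := W)) := by
  rintro ⟨φ, hφ⟩
  obtain ⟨⟨u, ψ⟩, rfl⟩ := (LinearMap.prodEquiv ℕ).surjective φ
  by_cases hψ : Function.Injective ψ
  · exact ⟨.inl (u, ⟨ψ, hψ⟩), rfl⟩
  · have hdisj := injective_prod_iff_disjoint_ker.1 hφ
    have hline := finrank_eq_one_of_disjoint_ker (mt LinearMap.ker_eq_bot.1 hψ) hdisj
    let m : TransverseLine K V :=
      ⟨(u, LinearMap.ker ψ), hline, (disjoint_ker_iff_of_finrank_eq_one hline).1 hdisj⟩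
    let β : InjLinearMap K (V ⧸ LinearMap.ker ψ) W :=
      ⟨(LinearMap.ker ψ).liftQ ψ le_rfl, LinearMap.ker_eq_bot.1 (ker_liftQ_eq_bot' _ _ rfl)⟩
    exact ⟨.inr ⟨m, β⟩, Subtype.ext (congrArg u.prod (liftQ_mkQ _ _ _))⟩

variable (K V W) in
/-- The bijection `(u, α) ↦ (u, α)`, `((u, L), β) ↦ (u, β ∘ (V → V ⧸ L))` from
`(V* × Inj(V, W)) ⊔ ∐_{(u, L) ∈ M} Inj(V ⧸ L, W)` onto the injective maps `V → K ⊕ W`. -/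
noncomputable def injLinearMapProdEquiv :
    Dual K V × InjLinearMap K V W ⊕ (Σ m : TransverseLine K V, InjLinearMap K (V ⧸ m.1.2) W) ≃
      InjLinearMap K V (K × W) :=
  .ofBijective injLinearMapProdMk ⟨injLinearMapProdMk_injective, injLinearMapProdMk_surjective⟩

/-- Transport of injective linear maps along linear equivalences of source and target. -/
def InjLinearMap.congr {V' W' : Type*} [AddCommGroup V'] [Module K V'] [AddCommGroup W']
    [Module K W'] (e : V ≃ₗ[K] V') (e' : W ≃ₗ[K] W') :
    InjLinearMap K V W ≃ InjLinearMap K V' W' :=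
  (e.arrowCongrAddEquiv e').toEquiv.subtypeEquiv fun f =>
    ((e'.comp_injective (f ∘ₗ e.symm.toLinearMap)).trans (e.symm.injective_comp f)).symm

/-- A choice of coordinates on the quotient of an `(n + 1)`-dimensional space by a line. -/
noncomputable def quotientLineEquiv [FiniteDimensional K V] {n : ℕ} (hV : finrank K V = n + 1)
    {L : Submodule K V} (hL : finrank K L = 1) : (Fin n → K) ≃ₗ[K] V ⧸ L :=
  .ofFinrankEq _ _ <| by
    have := finrank_quotient_add_finrank L
    rw [finrank_fin_fun]
    lia

end Splitting

section Coordinates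

variable {F : Type} [Field F] {x y y' : ℕ}

variable (F x y) in
/-- The bijection `Θ_y`: the splitting `injLinearMapProdEquiv` for `V = F^{x+1}` and `W = F^y`, with
every quotient `V ⧸ L` identified with `F^x` in a way that does not depend on `y`. -/
noncomputable def viHomSuccEquiv :
    Dual F (Fin (x + 1) → F) × VIHom F (x + 1) y ⊕
        TransverseLine F (Fin (x + 1) → F) × VIHom F x y ≃
      VIHom F (x + 1) (y + 1) :=
  calc
    _ ≃ Dual F (Fin (x + 1) → F) × InjLinearMap F (Fin (x + 1) → F) (Fin y → F) ⊕
          (Σ m : TransverseLine F (Fin (x + 1) → F),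
            InjLinearMap F ((Fin (x + 1) → F) ⧸ m.1.2) (Fin y → F)) :=
      .sumCongr (.refl _) <| (Equiv.sigmaEquivProd _ _).symm.trans <|
        .sigmaCongrRight fun m =>
          InjLinearMap.congr (quotientLineEquiv (finrank_fin_fun F) m.2.1) (.refl F _)
    _ ≃ InjLinearMap F (Fin (x + 1) → F) (F × (Fin y → F)) := injLinearMapProdEquiv F _ _
    _ ≃ _ := InjLinearMap.congr (.refl F _) (Fin.consLinearEquiv F fun _ => F)

-- Both sides are `v ↦ (u v, g (α v))`; in the next lemma `v ↦ (u v, g (β (p v)))`, where `p` is the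
-- projection `V → V ⧸ L` in coordinates.
theorem viHomSuccEquiv_inl_comp (g : VIHom F y y') (u : Dual F (Fin (x + 1) → F))
    (α : VIHom F (x + 1) y) :
    viHomSuccEquiv F x y' (.inl (u, VIcomp g α)) =
      VIcomp (VIshift g) (viHomSuccEquiv F x y (.inl (u, α))) :=
  rfl

theorem viHomSuccEquiv_inr_comp (g : VIHom F y y') (m : TransverseLine F (Fin (x + 1) → F))
    (β : VIHom F x y) :
    viHomSuccEquiv F x y' (.inr (m, VIcomp g β)) =
      VIcomp (VIshift g) (viHomSuccEquiv F x y (.inr (m, β))) :=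
  rfl

end Coordinates

section UnitPair

variable {K V : Type*} [DivisionRing K] [AddCommGroup V] [Module K V]

variable (K V) in
/-- The pairs `(u, v)` of a functional and a vector with `u v = 1`: a model of `TransverseLine` that
is easy to count, with each line replaced by its normalized generator. -/
abbrev UnitPair : Type _ :=
  { uv : Dual K V × V // uv.1 uv.2 = 1 }

theorem UnitPair.ne_zero (p : UnitPair K V) : p.1.2 ≠ 0 := fun h => by
  simpa [h] using p.2

/-- The line spanned by the vector of a unit pair, with the functional of the pair. -/
def UnitPair.toTransverseLine (p : UnitPair K V) : TransverseLine K V :=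
  ⟨(p.1.1, K ∙ p.1.2), finrank_span_singleton p.ne_zero, fun h =>
    one_ne_zero (p.2.symm.trans (h (mem_span_singleton_self p.1.2)))⟩

theorem UnitPair.toTransverseLine_injective :
    Function.Injective (toTransverseLine (K := K) (V := V)) := by
  rintro ⟨⟨u, v⟩, hv : u v = 1⟩ ⟨⟨u', v'⟩, hv' : u' v' = 1⟩ h
  obtain ⟨hu : u = u', hspan : K ∙ v = K ∙ v'⟩ := Prod.mk.inj (congrArg Subtype.val h)
  subst hu
  obtain ⟨c, rfl⟩ := mem_span_singleton.1 (hspan ▸ mem_span_singleton_self v)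
  obtain rfl : c = 1 := by rwa [map_smul, hv', smul_eq_mul, mul_one] at hv
  simp only [one_smul]

theorem UnitPair.toTransverseLine_surjective :
    Function.Surjective (toTransverseLine (K := K) (V := V)) := by
  rintro ⟨⟨u, L⟩, hL, hu⟩
  obtain ⟨w, hw, hne : u w ≠ 0⟩ := SetLike.not_le_iff_exists.1 hu
  have hunit : u ((u w)⁻¹ • w) = 1 := by rw [map_smul, smul_eq_mul, inv_mul_cancel₀ hne]
  let p : UnitPair K V := ⟨(u, (u w)⁻¹ • w), hunit⟩
  have hspan : L = K ∙ p.1.2 :=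
    eq_span_singleton_of_mem_of_finrank_eq_one hL (L.smul_mem _ hw) p.ne_zero
  exact ⟨p, Subtype.ext (Prod.ext rfl hspan.symm)⟩

end UnitPair

section Cardinality

theorem natCard_apply_eq_one {K V : Type*} [DivisionRing K] [AddCommGroup V] [Module K V]
    [FiniteDimensional K V] {u : Dual K V} (hu : u ≠ 0) :
    Nat.card { v : V // u v = 1 } = Nat.card K ^ (finrank K V - 1) := by
  have hcoset : { v : V // u v = 1 } ≃ LinearMap.ker u :=
    AddMonoidHom.fiberEquivKerOfSurjective (f := u.toAddMonoidHom) (LinearMap.surjective hu) 1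
  rw [Nat.card_congr hcoset, natCard_eq_pow_finrank (K := K),
    ← Dual.finrank_ker_add_one_of_ne_zero hu, Nat.add_sub_cancel]

variable (F V : Type*) [Field F] [AddCommGroup V] [Module F V] [FiniteDimensional F V]

theorem natCard_dual : Nat.card (Dual F V) = Nat.card F ^ finrank F V := by
  rw [natCard_eq_pow_finrank (K := F), Subspace.dual_finrank_eq]

theorem natCard_unitPair [Finite F] :
    Nat.card (UnitPair F V) = (Nat.card F ^ finrank F V - 1) * Nat.card F ^ (finrank F V - 1) := by
  classical
  have : Finite V := Module.finite_of_finite F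
  have : Finite (Dual F V) := Module.finite_of_finite F
  have : Fintype (Dual F V) := .ofFinite _
  have hzero : Nat.card { v : V // (0 : Dual F V) v = 1 } = 0 := by simp
  calc
    Nat.card (UnitPair F V) = ∑ u : Dual F V, Nat.card { v : V // u v = 1 } := by
      rw [Nat.card_congr (Equiv.subtypeProdEquivSigmaSubtype fun (u : Dual F V) v => u v = 1),
        Nat.card_sigma]
    _ = ∑ u ∈ Finset.univ.erase (0 : Dual F V), Nat.card { v : V // u v = 1 } :=
      (Finset.sum_erase (f := fun u : Dual F V => Nat.card { v : V // u v = 1 }) _ hzero).symm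
    _ = ∑ _u ∈ Finset.univ.erase (0 : Dual F V), Nat.card F ^ (finrank F V - 1) :=
      Finset.sum_congr rfl fun _ hu => natCard_apply_eq_one (Finset.ne_of_mem_erase hu)
    _ = (Nat.card F ^ finrank F V - 1) * Nat.card F ^ (finrank F V - 1) := by
      rw [Finset.sum_const, smul_eq_mul, Finset.card_erase_of_mem (Finset.mem_univ _),
        Finset.card_univ, Fintype.card_eq_nat_card, natCard_dual]

theorem natCard_transverseLine [Finite F] :
    Nat.card (TransverseLine F V) =
      (Nat.card F ^ finrank F V - 1) * Nat.card F ^ (finrank F V - 1) := by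
  rw [← natCard_unitPair F V, Nat.card_congr (.ofBijective UnitPair.toTransverseLine
    ⟨UnitPair.toTransverseLine_injective, UnitPair.toTransverseLine_surjective⟩)]

end Cardinality

theorem stmt15_general (F : Type) [Field F] (x : ℕ) :
    (∃ Θ : ∀ y : ℕ,
        Dual F (Fin (x + 1) → F) × VIHom F (x + 1) y ⊕
            TransverseLine F (Fin (x + 1) → F) × VIHom F x y ≃
          VIHom F (x + 1) (y + 1),
      ∀ (y y' : ℕ) (g : VIHom F y y'),
        (∀ (lam : Dual F (Fin (x + 1) → F)) (α : VIHom F (x + 1) y),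
          Θ y' (.inl (lam, VIcomp g α)) = VIcomp (VIshift g) (Θ y (.inl (lam, α)))) ∧
        (∀ (uL : TransverseLine F (Fin (x + 1) → F)) (β : VIHom F x y),
          Θ y' (.inr (uL, VIcomp g β)) = VIcomp (VIshift g) (Θ y (.inr (uL, β))))) ∧
    (Finite F →
      Nat.card (Dual F (Fin (x + 1) → F)) = Nat.card F ^ (x + 1) ∧
      Nat.card (TransverseLine F (Fin (x + 1) → F)) =
        (Nat.card F ^ (x + 1) - 1) * Nat.card F ^ x) := by
  refine ⟨⟨viHomSuccEquiv F x, fun y y' g =>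
    ⟨viHomSuccEquiv_inl_comp g, viHomSuccEquiv_inr_comp g⟩⟩, fun _ => ⟨?_, ?_⟩⟩
  · rw [natCard_dual, finrank_fin_fun]
  · rw [natCard_transverseLine, finrank_fin_fun, Nat.add_sub_cancel]

/-- Let `F` be a finite field with `q` elements and `x ≥ 1` (the paper's
`x` is our `x+1`).  Let `Λ = Hom_F(F^x, F)` and let `M` be the set of pairs `(u, L)` with
`u ∈ Hom_F(F^x, F)` and `L ⊆ F^x` a 1-dimensional subspace not contained in `ker u`.  Then
there is a family of bijections `Θ_y : (Λ × VI(x,y)) ⊔ (M × VI(x−1,y)) → VI(x,1+y)`, `y ∈ ℕ`,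
natural with respect to postcomposition by injective linear maps `g : F^y → F^{y′}`:
`Θ_{y′}(λ, g∘α) = (id_F ⊕ g) ∘ Θ_y(λ, α)` and `Θ_{y′}((u,L), g∘β) = (id_F ⊕ g) ∘ Θ_y((u,L), β)`.
Moreover `|Λ| = q^x` and `|M| = (q^x − 1)·q^{x−1}`. -/
theorem stmt15 (F : Type) [Field F] [Fintype F] (q : ℕ) (hq : Fintype.card F = q) (x : ℕ) :
    (∃ Θ : ∀ y : ℕ,
        ((((Fin (x + 1) → F) →ₗ[F] F) × VIHom F (x + 1) y) ⊕
          ({ uL : ((Fin (x + 1) → F) →ₗ[F] F) × Submodule F (Fin (x + 1) → F) //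
              Module.finrank F uL.2 = 1 ∧ ¬ uL.2 ≤ LinearMap.ker uL.1 } × VIHom F x y)) ≃
        VIHom F (x + 1) (y + 1),
      ∀ (y y' : ℕ) (g : VIHom F y y'),
        (∀ (lam : (Fin (x + 1) → F) →ₗ[F] F) (α : VIHom F (x + 1) y),
          Θ y' (Sum.inl (lam, VIcomp g α)) = VIcomp (VIshift g) (Θ y (Sum.inl (lam, α)))) ∧
        (∀ (uL : { uL : ((Fin (x + 1) → F) →ₗ[F] F) × Submodule F (Fin (x + 1) → F) //
              Module.finrank F uL.2 = 1 ∧ ¬ uL.2 ≤ LinearMap.ker uL.1 })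
           (β : VIHom F x y),
          Θ y' (Sum.inr (uL, VIcomp g β)) = VIcomp (VIshift g) (Θ y (Sum.inr (uL, β))))) ∧
    Nat.card ((Fin (x + 1) → F) →ₗ[F] F) = q ^ (x + 1) ∧
    Nat.card { uL : ((Fin (x + 1) → F) →ₗ[F] F) × Submodule F (Fin (x + 1) → F) //
        Module.finrank F uL.2 = 1 ∧ ¬ uL.2 ≤ LinearMap.ker uL.1 } =
      (q ^ (x + 1) - 1) * q ^ x := by
  obtain ⟨hΘ, hcard⟩ := stmt15_general F x
  exact ⟨hΘ, by simpa only [Nat.card_eq_fintype_card, hq] using hcard inferInstance⟩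
end
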